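/- Let K be a convex body in ℝⁿ whose boundary is of class C² with everywhere positive Gauss–Kronecker curvature. Then for every 0 < δ < vol(K), the boundary of the convolution body K(δ) = {x : vol(K ∩ (x+K)) ≥ δ} has everywhere positive Gauss–Kronecker curvature. -/

import Mathlib

open MeasureTheory Set
open scoped Pointwise

/-- A set has `C²` boundary with everywhere positive Gauss–Kronecker curvature if its
boundary is a regular level set of a `C²` function whose Hessian is positive definite on
each tangent hyperplane of the boundary. -/
def HasC2PositiveCurvatureBoundary {E : Type*} [NormedAddCommGroup E] [NormedSpace ℝ E]
    (C : Set E) : Prop :=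
  ∃ (g : E → ℝ) (U : Set E), IsOpen U ∧ frontier C ⊆ U ∧ ContDiffOn ℝ 2 g U ∧
    (∀ x ∈ U, (x ∈ frontier C ↔ g x = 0)) ∧
    (∀ x ∈ U, x ∈ interior C → g x < 0) ∧
    ∀ x ∈ frontier C, fderiv ℝ g x ≠ 0 ∧
      ∀ v : E, v ≠ 0 → fderiv ℝ g x v = 0 → 0 < iteratedFDeriv ℝ 2 g x ![v, v]

/-!
`K(δ)` is a superlevel set of the covariogram `G x = μ (K ∩ (x + K))`. By the Brunn–Minkowski
inequality `G` is log-concave, so it strictly decreases along rays until it vanishes: the frontier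
of `K(δ)` is the level set `G = δ`, on which the gradient of `G` is nonzero.

Projecting along `x` and using polar coordinates, `G x` is an integral of chord lengths. These are
`C²` by the implicit function theorem at the two ends of the chord, and the integrand vanishes
on the moving edge of the domain of integration, so `G` is `C²`.

For the sign of the Hessian on a tangent vector `v`, take a functional `θ` supporting `K` at both
ends of a longest chord in the direction `x`, perturbed slightly so that `θ v ≠ 0`. When `x` moves
to `x + t • v`, the upper cap of `K ∩ (x + K)` along `θ` stays fixed while the lower cap slides
at speed `θ v`. If `G` lost only `o(t²)`, the Brunn–Minkowski inequality for the parts of the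
overlaps at `x ± t • v` above and below suitable levels of `θ` would be nearly an equality at every
level, which forces both caps to slide at the same speed up to `o(t)`. So `G` drops by at least
`η * t ^ 2` for arbitrarily small `t`.
-/

open scoped Topology ENNReal

section BrunnMinkowski

theorem volume_add_le_volume_of_isCompact {A B Z : Set ℝ} (hA : IsCompact A) (hB : IsCompact B)
    (hA0 : A.Nonempty) (hB0 : B.Nonempty) (hZ : ∀ a ∈ A, ∀ b ∈ B, a + b ∈ Z) :
    volume A + volume B ≤ volume Z := by
  obtain ⟨a, ha, hamax⟩ := hA.exists_isMaxOn hA0 continuousOn_id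
  obtain ⟨b, hb, hbmin⟩ := hB.exists_isMinOn hB0 continuousOn_id
  have hinter : ((· + b) '' A) ∩ ((a + ·) '' B) ⊆ {a + b} := by
    rintro _ ⟨⟨x, hx, rfl⟩, ⟨y, hy, hxy⟩⟩
    have hxa : x ≤ a := hamax hx
    have hby : b ≤ y := hbmin hy
    simp only [mem_singleton_iff] at *
    linarith
  have hmeas : MeasurableSet ((a + ·) '' B) :=
    (hB.image (continuous_const_add a)).isClosed.measurableSet
  calc volume A + volume B
      = volume ((· + b) '' A) + volume ((a + ·) '' B) := by
        simp [Set.image_add_right, Set.image_add_left]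
    _ = volume (((· + b) '' A) ∪ ((a + ·) '' B)) :=
        (measure_union₀ hmeas.nullMeasurableSet (measure_mono_null hinter (by simp))).symm
    _ ≤ volume Z := by
        apply measure_mono
        rintro _ (⟨x, hx, rfl⟩ | ⟨x, hx, rfl⟩)
        · exact hZ x hx b hb
        · exact hZ a ha x hx

theorem volume_add_le_volume {A B Z : Set ℝ} (hA : MeasurableSet A)
    (hB : MeasurableSet B) (hA0 : A.Nonempty) (hB0 : B.Nonempty)
    (hZ : ∀ a ∈ A, ∀ b ∈ B, a + b ∈ Z) :
    volume A + volume B ≤ volume Z := by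
  obtain ⟨a₀, ha₀⟩ := hA0
  obtain ⟨b₀, hb₀⟩ := hB0
  rw [hA.measure_eq_iSup_isCompact, hB.measure_eq_iSup_isCompact]
  simp only [iSup_and']
  refine ENNReal.biSup_add_biSup_le' ⟨∅, empty_subset _, isCompact_empty⟩
    ⟨∅, empty_subset _, isCompact_empty⟩ ?_
  rintro K ⟨hKA, hK⟩ L ⟨hLB, hL⟩
  calc volume K + volume L ≤ volume (insert a₀ K) + volume (insert b₀ L) :=
        add_le_add (measure_mono (subset_insert _ _)) (measure_mono (subset_insert _ _))
    _ ≤ volume Z := volume_add_le_volume_of_isCompact (hK.insert a₀) (hL.insert b₀)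
        (insert_nonempty _ _) (insert_nonempty _ _) fun a ha b hb =>
          hZ a (insert_subset ha₀ hKA ha) b (insert_subset hb₀ hLB hb)

theorem ofReal_mul_volume_add_le_volume {s t : ℝ} (hs : 0 < s) (ht : 0 < t) {A B Z : Set ℝ}
    (hA : MeasurableSet A) (hB : MeasurableSet B) (hA0 : A.Nonempty) (hB0 : B.Nonempty)
    (hZ : ∀ a ∈ A, ∀ b ∈ B, s * a + t * b ∈ Z) :
    ENNReal.ofReal s * volume A + ENNReal.ofReal t * volume B ≤ volume Z := by
  have h := volume_add_le_volume (A := s • A) (B := t • B) (Z := Z)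
    (hA.const_smul₀ s) (hB.const_smul₀ t) hA0.smul_set hB0.smul_set (by
      rintro _ ⟨a, ha, rfl⟩ _ ⟨b, hb, rfl⟩
      simpa using hZ a ha b hb)
  simpa [Measure.addHaar_smul, abs_of_pos hs, abs_of_pos ht] using h

theorem lintegral_eq_setLIntegral_Ioo_measure_lt {α : Type*} [MeasurableSpace α] (μ : Measure α)
    {f : α → ℝ≥0∞} (hf : Measurable f) (hf1 : ∀ x, f x ≤ 1) :
    ∫⁻ x, f x ∂μ = ∫⁻ t in Ioo (0 : ℝ) 1, μ {x | ENNReal.ofReal t < f x} := by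
  have hfin : ∀ x, f x ≠ ∞ := fun x => ((hf1 x).trans_lt ENNReal.one_lt_top).ne
  have hempty : ∀ t ∈ Ici (1 : ℝ), μ {x | t < (f x).toReal} = 0 := fun t ht => by
    convert measure_empty (μ := μ)
    refine eq_empty_of_forall_notMem fun x (hx : t < _) => (lt_of_le_of_lt ht hx).not_ge ?_
    simpa using ENNReal.toReal_mono ENNReal.one_ne_top (hf1 x)
  calc ∫⁻ x, f x ∂μ = ∫⁻ x, ENNReal.ofReal (f x).toReal ∂μ := by
        simp only [ENNReal.ofReal_toReal (hfin _)]
    _ = ∫⁻ t in Ioi 0, μ {x | t < (f x).toReal} :=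
        lintegral_eq_lintegral_meas_lt μ (.of_forall fun x => ENNReal.toReal_nonneg)
          hf.ennreal_toReal.aemeasurable
    _ = ∫⁻ t in Ioo (0 : ℝ) 1, μ {x | t < (f x).toReal} := by
        rw [← Ioo_union_Ici_eq_Ioi (zero_lt_one' ℝ), lintegral_union measurableSet_Ici
          (disjoint_left.mpr fun t ht ht' => ht.2.not_ge ht'),
          setLIntegral_congr_fun measurableSet_Ici hempty, lintegral_zero, add_zero]
    _ = ∫⁻ t in Ioo (0 : ℝ) 1, μ {x | ENNReal.ofReal t < f x} :=
        setLIntegral_congr_fun measurableSet_Ioo fun t ht => by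
          simp only [ENNReal.ofReal_lt_iff_lt_toReal ht.1.le (hfin _)]

variable {a b : ℝ}

theorem ofReal_mul_lintegral_add_le_lintegral_of_iSup_eq_one (ha : 0 < a) (hb : 0 < b)
    (hab : a + b = 1) {f g h : ℝ → ℝ≥0∞} (hf : Measurable f) (hg : Measurable g)
    (hh : Measurable h) (hf1 : ⨆ x, f x = 1) (hg1 : ⨆ x, g x = 1)
    (H : ∀ x y, f x ^ a * g y ^ b ≤ h (a * x + b * y)) :
    ENNReal.ofReal a * (∫⁻ x, f x) + ENNReal.ofReal b * (∫⁻ x, g x) ≤ ∫⁻ x, h x := by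
  have hmeas : ∀ u : ℝ → ℝ≥0∞, Measurable fun t : ℝ => volume {x | ENNReal.ofReal t < u x} :=
    fun u => Antitone.measurable fun t t' htt' =>
      measure_mono fun x hx => lt_of_le_of_lt (ENNReal.ofReal_le_ofReal htt') hx
  refine le_trans ?_ (lintegral_mono fun x => min_le_left (h x) 1)
  rw [lintegral_eq_setLIntegral_Ioo_measure_lt volume hf fun x => hf1 ▸ le_iSup f x,
    lintegral_eq_setLIntegral_Ioo_measure_lt volume hg fun x => hg1 ▸ le_iSup g x,
    lintegral_eq_setLIntegral_Ioo_measure_lt volume (hh.min measurable_const)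
      fun x => min_le_right _ _,
    ← lintegral_const_mul _ (hmeas f), ← lintegral_const_mul _ (hmeas g),
    ← lintegral_add_left ((hmeas f).const_mul _)]
  refine setLIntegral_mono' measurableSet_Ioo fun t ht => ?_
  have ht1 : ENNReal.ofReal t < 1 := by simpa using ht.2
  refine ofReal_mul_volume_add_le_volume ha hb (measurableSet_lt measurable_const hf)
    (measurableSet_lt measurable_const hg) (nonempty_def.mpr (lt_iSup_iff.mp (hf1 ▸ ht1)))
    (nonempty_def.mpr (lt_iSup_iff.mp (hg1 ▸ ht1))) fun x hx y hy => lt_min ?_ ht1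
  calc ENNReal.ofReal t = ENNReal.ofReal t ^ a * ENNReal.ofReal t ^ b := by
        rw [← ENNReal.rpow_add _ _ (by simpa using ht.1) ENNReal.ofReal_ne_top, hab,
          ENNReal.rpow_one]
    _ < f x ^ a * g y ^ b :=
        ENNReal.mul_lt_mul (ENNReal.rpow_lt_rpow hx ha) (ENNReal.rpow_lt_rpow hy hb)
    _ ≤ h (a * x + b * y) := H x y

theorem rpow_mul_rpow_le_ofReal_mul_add (ha : 0 < a) (hb : 0 < b) (hab : a + b = 1)
    (x y : ℝ≥0∞) : x ^ a * y ^ b ≤ ENNReal.ofReal a * x + ENNReal.ofReal b * y := by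
  have h := ENNReal.young_inequality (x ^ a) (y ^ b) (Real.HolderConjugate.inv_inv ha hb hab)
  rwa [ENNReal.rpow_rpow_inv ha.ne', ENNReal.rpow_rpow_inv hb.ne', ENNReal.ofReal_inv_of_pos ha,
    ENNReal.ofReal_inv_of_pos hb, div_eq_mul_inv, div_eq_mul_inv, inv_inv, inv_inv, mul_comm x,
    mul_comm y] at h

theorem prekopaLeindler_real_of_bounded (ha : 0 < a) (hb : 0 < b) (hab : a + b = 1)
    {f g h : ℝ → ℝ≥0∞} (hf : Measurable f) (hg : Measurable g) (hh : Measurable h)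
    (hf' : ⨆ x, f x ≠ ∞) (hg' : ⨆ x, g x ≠ ∞)
    (H : ∀ x y, f x ^ a * g y ^ b ≤ h (a * x + b * y)) :
    (∫⁻ x, f x) ^ a * (∫⁻ x, g x) ^ b ≤ ∫⁻ x, h x := by
  set A := ⨆ x, f x with hA
  set B := ⨆ x, g x with hB
  rcases eq_or_ne A 0 with hA0 | hA0
  · have : ∀ x, f x = 0 := by simpa [hA] using hA0
    simp [this, ha]
  rcases eq_or_ne B 0 with hB0 | hB0
  · have : ∀ x, g x = 0 := by simpa [hB] using hB0
    simp [this, hb]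
  set D := A ^ a * B ^ b
  have hD0 : D ≠ 0 := by simp [D, hA0, hB0, hf', hg']
  have hAtop : A ^ a ≠ ∞ := ENNReal.rpow_ne_top_of_nonneg ha.le hf'
  have hBtop : B ^ b ≠ ∞ := ENNReal.rpow_ne_top_of_nonneg hb.le hg'
  have hscale : ∀ u w : ℝ≥0∞, (A⁻¹ * u) ^ a * (B⁻¹ * w) ^ b = D⁻¹ * (u ^ a * w ^ b) := by
    intro u w
    rw [ENNReal.mul_rpow_of_nonneg _ _ ha.le, ENNReal.mul_rpow_of_nonneg _ _ hb.le,
      ENNReal.mul_inv (Or.inr hBtop) (Or.inl hAtop), ENNReal.inv_rpow, ENNReal.inv_rpow,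
      mul_mul_mul_comm]
  have hnormalized := ofReal_mul_lintegral_add_le_lintegral_of_iSup_eq_one ha hb hab
    (f := fun x => A⁻¹ * f x) (g := fun x => B⁻¹ * g x) (h := fun x => D⁻¹ * h x)
    (hf.const_mul _) (hg.const_mul _) (hh.const_mul _)
    (by rw [← ENNReal.mul_iSup, ENNReal.inv_mul_cancel hA0 hf'])
    (by rw [← ENNReal.mul_iSup, ENNReal.inv_mul_cancel hB0 hg'])
    fun x y => by rw [hscale]; gcongr; exact H x y
  rw [lintegral_const_mul _ hf, lintegral_const_mul _ hg, lintegral_const_mul _ hh] at hnormalized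
  have hprod := (rpow_mul_rpow_le_ofReal_mul_add ha hb hab _ _).trans hnormalized
  rw [hscale] at hprod
  exact (ENNReal.mul_le_mul_iff_right (ENNReal.inv_ne_zero.mpr (ENNReal.mul_ne_top hAtop hBtop))
    (ENNReal.inv_ne_top.mpr hD0)).mp hprod

theorem tendsto_lintegral_min_natCast {α : Type*} [MeasurableSpace α] (μ : Measure α)
    {f : α → ℝ≥0∞} (hf : Measurable f) :
    Filter.Tendsto (fun N : ℕ => ∫⁻ x, min (f x) N ∂μ) Filter.atTop (𝓝 (∫⁻ x, f x ∂μ)) := by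
  have hmono : Monotone fun (N : ℕ) x => min (f x) N :=
    fun N N' h x => min_le_min_left _ (by exact_mod_cast h)
  have hsup : ∫⁻ x, f x ∂μ = ⨆ N : ℕ, ∫⁻ x, min (f x) N ∂μ := by
    rw [← lintegral_iSup (fun N => hf.min measurable_const) hmono]
    simp only [← inf_iSup_eq, ENNReal.iSup_natCast, inf_top_eq]
  exact hsup ▸ tendsto_atTop_iSup fun N N' h => lintegral_mono (hmono h)

theorem prekopaLeindler_real (ha : 0 < a) (hb : 0 < b) (hab : a + b = 1)
    {f g h : ℝ → ℝ≥0∞} (hf : Measurable f) (hg : Measurable g) (hh : Measurable h)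
    (H : ∀ x y, f x ^ a * g y ^ b ≤ h (a * x + b * y)) :
    (∫⁻ x, f x) ^ a * (∫⁻ x, g x) ^ b ≤ ∫⁻ x, h x := by
  rcases eq_or_ne (∫⁻ x, f x) 0 with hf0 | hf0
  · simp [hf0, ha]
  rcases eq_or_ne (∫⁻ x, g x) 0 with hg0 | hg0
  · simp [hg0, hb]
  refine le_of_tendsto
    (ENNReal.Tendsto.mul ((tendsto_lintegral_min_natCast volume hf).ennrpow_const a)
      (Or.inl (by simp [hf0, ha.le, ha]))
      ((tendsto_lintegral_min_natCast volume hg).ennrpow_const b)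
      (Or.inl (by simp [hg0, hb.le, hb])))
    (.of_forall fun N => ?_)
  have hbdd : ∀ u : ℝ → ℝ≥0∞, ⨆ x, min (u x) (N : ℝ≥0∞) ≠ ∞ := fun u =>
    ((iSup_le fun x => min_le_right _ _).trans_lt (ENNReal.natCast_lt_top N)).ne
  refine prekopaLeindler_real_of_bounded ha hb hab (hf.min measurable_const)
    (hg.min measurable_const) hh (hbdd f) (hbdd g) fun x y => le_trans ?_ (H x y)
  gcongr <;> exact min_le_left _ _

theorem measurable_fin_cons {n : ℕ} :
    Measurable fun p : ℝ × (Fin n → ℝ) => (Fin.cons p.1 p.2 : Fin (n + 1) → ℝ) :=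
  measurable_pi_iff.mpr <| Fin.cases (by simpa using measurable_fst) fun j => by
    simpa [Function.comp_def] using (measurable_pi_apply j).comp measurable_snd

theorem lintegral_fin_succ_eq_lintegral_fin_cons {n : ℕ} {f : (Fin (n + 1) → ℝ) → ℝ≥0∞}
    (hf : Measurable f) :
    ∫⁻ x, f x = ∫⁻ s : ℝ, ∫⁻ y : Fin n → ℝ, f (Fin.cons s y) := by
  have hmp := (volume_preserving_piFinSuccAbove (fun _ : Fin (n + 1) => ℝ) 0).symm
  rw [← hmp.lintegral_comp hf, Measure.volume_eq_prod, lintegral_prod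
    (fun p => f ((MeasurableEquiv.piFinSuccAbove (fun _ => ℝ) 0).symm p))
    (hf.comp hmp.measurable).aemeasurable]
  simp [Fin.insertNthEquiv]

theorem prekopaLeindler_pi (ha : 0 < a) (hb : 0 < b) (hab : a + b = 1) (n : ℕ)
    {f g h : (Fin n → ℝ) → ℝ≥0∞} (hf : Measurable f) (hg : Measurable g) (hh : Measurable h)
    (H : ∀ x y, f x ^ a * g y ^ b ≤ h (a • x + b • y)) :
    (∫⁻ x, f x) ^ a * (∫⁻ x, g x) ^ b ≤ ∫⁻ x, h x := by
  induction n with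
  | zero =>
    simp only [Measure.volume_pi_eq_dirac 0, lintegral_dirac]
    convert H 0 0
  | succ n ih =>
    have hslice : ∀ {u : (Fin (n + 1) → ℝ) → ℝ≥0∞}, Measurable u → ∀ s : ℝ,
        Measurable fun y : Fin n → ℝ => u (Fin.cons s y) := fun hu s =>
      hu.comp (measurable_fin_cons.comp measurable_prodMk_left)
    rw [lintegral_fin_succ_eq_lintegral_fin_cons hf, lintegral_fin_succ_eq_lintegral_fin_cons hg,
      lintegral_fin_succ_eq_lintegral_fin_cons hh]
    refine prekopaLeindler_real ha hb hab (hf.comp measurable_fin_cons).lintegral_prod_right'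
      (hg.comp measurable_fin_cons).lintegral_prod_right'
      (hh.comp measurable_fin_cons).lintegral_prod_right' fun s t =>
        ih (hslice hf s) (hslice hg t) (hslice hh _) fun x y => ?_
    convert H (Fin.cons s x) (Fin.cons t y) using 2
    ext i
    refine Fin.cases ?_ (fun j => ?_) i <;> simp

variable {E : Type*} [NormedAddCommGroup E] [NormedSpace ℝ E] [FiniteDimensional ℝ E]
  [MeasurableSpace E] [BorelSpace E] (μ : Measure E) [μ.IsAddHaarMeasure]

theorem prekopaLeindler (ha : 0 < a) (hb : 0 < b) (hab : a + b = 1) {f g h : E → ℝ≥0∞}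
    (hf : Measurable f) (hg : Measurable g) (hh : Measurable h)
    (H : ∀ x y, f x ^ a * g y ^ b ≤ h (a • x + b • y)) :
    (∫⁻ x, f x ∂μ) ^ a * (∫⁻ x, g x ∂μ) ^ b ≤ ∫⁻ x, h x ∂μ := by
  let L : (Fin (Module.finrank ℝ E) → ℝ) ≃L[ℝ] E :=
    ContinuousLinearEquiv.ofFinrankEq (Module.finrank_fin_fun ℝ)
  have hL : Measurable L := L.continuous.measurable
  have : (volume.map L).IsAddHaarMeasure := L.isAddHaarMeasure_map volume
  obtain ⟨c, hc⟩ : ∃ c : ℝ≥0∞, ∀ {u : E → ℝ≥0∞}, Measurable u →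
      ∫⁻ x, u x ∂μ = c * ∫⁻ x, u (L x) := ⟨_, fun hu => by
    rw [Measure.isAddLeftInvariant_eq_smul μ (volume.map L), lintegral_smul_measure,
      lintegral_map hu hL]
    rfl⟩
  rw [hc hf, hc hg, hc hh, ENNReal.mul_rpow_of_nonneg _ _ ha.le,
    ENNReal.mul_rpow_of_nonneg _ _ hb.le, mul_mul_mul_comm,
    ← ENNReal.rpow_add_of_nonneg _ _ ha.le hb.le, hab, ENNReal.rpow_one]
  gcongr
  exact prekopaLeindler_pi ha hb hab _ (hf.comp hL) (hg.comp hL) (hh.comp hL) fun x y => by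
    simpa using H (L x) (L y)

theorem measure_rpow_mul_measure_rpow_le (ha : 0 < a) (hb : 0 < b) (hab : a + b = 1)
    {A B Z : Set E} (hA : MeasurableSet A) (hB : MeasurableSet B) (hZ : MeasurableSet Z)
    (H : ∀ x ∈ A, ∀ y ∈ B, a • x + b • y ∈ Z) :
    μ A ^ a * μ B ^ b ≤ μ Z := by
  simp only [← lintegral_indicator_one hA, ← lintegral_indicator_one hB,
    ← lintegral_indicator_one hZ]
  refine prekopaLeindler μ ha hb hab (measurable_one.indicator hA) (measurable_one.indicator hB)
    (measurable_one.indicator hZ) fun x y => ?_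
  by_cases hx : x ∈ A
  · by_cases hy : y ∈ B
    · simp [hx, hy, H x hx y hy]
    · simp [hy, hb]
  · simp [hx, ha]

theorem measureReal_rpow_mul_measureReal_rpow_le (ha : 0 < a) (hb : 0 < b) (hab : a + b = 1)
    {A B Z : Set E} (hA : MeasurableSet A) (hB : MeasurableSet B) (hZ : MeasurableSet Z)
    (hZfin : μ Z ≠ ∞) (H : ∀ x ∈ A, ∀ y ∈ B, a • x + b • y ∈ Z) :
    μ.real A ^ a * μ.real B ^ b ≤ μ.real Z := by
  simp only [measureReal_def]
  rw [ENNReal.toReal_rpow, ENNReal.toReal_rpow, ← ENNReal.toReal_mul]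
  exact ENNReal.toReal_mono hZfin (measure_rpow_mul_measure_rpow_le μ ha hb hab hA hB hZ H)

end BrunnMinkowski

section LogConcave

/-- Log-concavity of a nonnegative function, in multiplicative form so that zeros are allowed. -/
def IsLogConcave {V : Type*} [AddCommGroup V] [Module ℝ V] (f : V → ℝ) : Prop :=
  ∀ ⦃a b : ℝ⦄, 0 < a → 0 < b → a + b = 1 → ∀ x y, f x ^ a * f y ^ b ≤ f (a • x + b • y)

theorem IsLogConcave.min_le_midpoint {V : Type*} [AddCommGroup V] [Module ℝ V] {f : V → ℝ}
    (hf : IsLogConcave f) {x y : V} (h : 0 < min (f x) (f y)) :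
    min (f x) (f y) ≤ f ((1 / 2 : ℝ) • x + (1 / 2 : ℝ) • y) := by
  refine le_trans ?_ (hf one_half_pos one_half_pos (add_halves 1) x y)
  calc min (f x) (f y) = min (f x) (f y) ^ (1 / 2 : ℝ) * min (f x) (f y) ^ (1 / 2 : ℝ) := by
        rw [← Real.rpow_add h, add_halves, Real.rpow_one]
    _ ≤ f x ^ (1 / 2 : ℝ) * f y ^ (1 / 2 : ℝ) := by
        have hx : 0 ≤ f x := h.le.trans (min_le_left _ _)
        gcongr
        exacts [min_le_left _ _, min_le_right _ _]

theorem isLogConcave_measureReal_preimage_prodMk {E F : Type*} [NormedAddCommGroup E]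
    [NormedSpace ℝ E] [FiniteDimensional ℝ E] [MeasurableSpace E] [BorelSpace E] (μ : Measure E)
    [μ.IsAddHaarMeasure] [AddCommGroup F] [Module ℝ F] {C : Set (F × E)} (hC : Convex ℝ C)
    (hmeas : ∀ p, MeasurableSet (Prod.mk p ⁻¹' C)) (hfin : ∀ p, μ (Prod.mk p ⁻¹' C) ≠ ∞) :
    IsLogConcave fun p => μ.real (Prod.mk p ⁻¹' C) :=
  fun _ _ ha hb hab p q => measureReal_rpow_mul_measureReal_rpow_le μ ha hb hab (hmeas p)
    (hmeas q) (hmeas _) (hfin _) fun _ hx _ hy => hC hx hy ha.le hb.le hab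

end LogConcave

section ExpLevel

/-- The largest `c` with `exp ρ ≤ F c`: the generalized inverse, on a logarithmic scale, of a
nonincreasing function `F`. Concave in `ρ` when `F` is log-concave. -/
noncomputable def expLevel (F : ℝ → ℝ) (ρ : ℝ) : ℝ := sSup {c | Real.exp ρ ≤ F c}

variable {F G J : ℝ → ℝ} {ρ ρ' c : ℝ}

theorem le_expLevel (hF : BddAbove {c | Real.exp ρ ≤ F c}) (hc : Real.exp ρ ≤ F c) :
    c ≤ expLevel F ρ :=
  le_csSup hF hc

theorem expLevel_le (hne : ∃ c, Real.exp ρ ≤ F c) (h : ∀ x, Real.exp ρ ≤ F x → x ≤ c) :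
    expLevel F ρ ≤ c :=
  csSup_le hne h

theorem lt_exp_of_expLevel_lt (hF : BddAbove {c | Real.exp ρ ≤ F c}) (hc : expLevel F ρ < c) :
    F c < Real.exp ρ :=
  lt_of_not_ge fun h => hc.not_ge (le_expLevel hF h)

theorem expLevel_anti (hF : BddAbove {c | Real.exp ρ ≤ F c}) (hne : ∃ c, Real.exp ρ' ≤ F c)
    (h : ρ ≤ ρ') : expLevel F ρ' ≤ expLevel F ρ :=
  csSup_le_csSup hF hne fun _ hc => (Real.exp_le_exp.mpr h).trans hc

theorem expLevel_eq_of_eqOn_Ici (hF : BddAbove {c | Real.exp ρ ≤ F c})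
    (hG : BddAbove {c | Real.exp ρ ≤ G c}) (hFG : EqOn F G (Ici c)) (hc : Real.exp ρ ≤ F c) :
    expLevel F ρ = expLevel G ρ := by
  have hcG : Real.exp ρ ≤ G c := hFG self_mem_Ici ▸ hc
  refine le_antisymm (expLevel_le ⟨c, hc⟩ fun x hx => ?_) (expLevel_le ⟨c, hcG⟩ fun x hx => ?_)
  · rcases le_total x c with hxc | hcx
    · exact hxc.trans (le_expLevel hG hcG)
    · exact le_expLevel hG (hFG hcx ▸ hx)
  · rcases le_total x c with hxc | hcx
    · exact hxc.trans (le_expLevel hF hc)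
    · exact le_expLevel hF ((hFG hcx).symm ▸ hx)

theorem mul_expLevel_add_mul_expLevel_le {a b : ℝ} (ha : 0 < a) (hb : 0 < b)
    (hJ : BddAbove {c | Real.exp (a * ρ + b * ρ') ≤ J c})
    (hcomb : ∀ c c', F c ^ a * G c' ^ b ≤ J (a * c + b * c'))
    (hneF : ∃ c, Real.exp ρ ≤ F c) (hneG : ∃ c, Real.exp ρ' ≤ G c) :
    a * expLevel F ρ + b * expLevel G ρ' ≤ expLevel J (a * ρ + b * ρ') := by
  have hpoint : ∀ c, Real.exp ρ ≤ F c → ∀ c', Real.exp ρ' ≤ G c' →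
      a * c + b * c' ≤ expLevel J (a * ρ + b * ρ') := fun c hc c' hc' => by
    refine le_expLevel hJ (le_trans ?_ (hcomb c c'))
    calc Real.exp (a * ρ + b * ρ') = Real.exp ρ ^ a * Real.exp ρ' ^ b := by
          rw [Real.exp_add, ← Real.exp_mul, ← Real.exp_mul, mul_comm ρ, mul_comm ρ']
      _ ≤ F c ^ a * G c' ^ b := by
          have hFc : 0 ≤ F c := (Real.exp_pos ρ).le.trans hc
          gcongr
  have hleft : ∀ c', Real.exp ρ' ≤ G c' →
      expLevel F ρ ≤ (expLevel J (a * ρ + b * ρ') - b * c') / a := fun c' hc' =>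
    expLevel_le hneF fun c hc => by rw [le_div_iff₀ ha]; linarith [hpoint c hc c' hc']
  have hright : expLevel G ρ' ≤ (expLevel J (a * ρ + b * ρ') - a * expLevel F ρ) / b :=
    expLevel_le hneG fun c' hc' => by
      have := hleft c' hc'
      rw [le_div_iff₀ ha] at this
      rw [le_div_iff₀ hb]
      linarith
  rw [le_div_iff₀ hb] at hright
  linarith

theorem concaveOn_expLevel {b : ℝ} (hF : IsLogConcave F)
    (hbdd : ∀ ρ, BddAbove {c | Real.exp ρ ≤ F c}) (hne : ∃ c, Real.exp b ≤ F c) :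
    ConcaveOn ℝ (Iic b) (expLevel F) := by
  have hne' : ∀ ρ ≤ b, ∃ c, Real.exp ρ ≤ F c := fun ρ hρ =>
    hne.imp fun _ h => (Real.exp_le_exp.mpr hρ).trans h
  exact concaveOn_iff_forall_pos.mpr ⟨convex_Iic b, fun x hx y hy s t hs ht hst =>
    mul_expLevel_add_mul_expLevel_le hs ht (hbdd _) (hF hs ht hst) (hne' x hx) (hne' y hy)⟩

end ExpLevel

section RealEstimates

theorem sub_le_slope_mul_of_concaveOn_Iic {φ : ℝ → ℝ} {b r x y : ℝ} (hφ : ConcaveOn ℝ (Iic b) φ)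
    (hxy : x ≤ y) (hyr : y ≤ r) (hrb : r < b) :
    φ x - φ y ≤ (φ r - φ b) / (b - r) * (y - x) := by
  rcases hxy.eq_or_lt with rfl | hxy
  · simp
  have hslope : (φ b - φ r) / (b - r) ≤ (φ y - φ x) / (y - x) := by
    rcases hyr.eq_or_lt with rfl | hyr
    · exact hφ.slope_anti_adjacent (by simp; linarith) self_mem_Iic hxy hrb
    · exact (hφ.slope_anti_adjacent (by simp; linarith) self_mem_Iic hyr hrb).trans
        (hφ.slope_anti_adjacent (by simp; linarith) hrb.le hxy hyr)
  rw [le_div_iff₀ (sub_pos.mpr hxy)] at hslope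
  calc φ x - φ y ≤ -((φ b - φ r) / (b - r) * (y - x)) := by linarith
    _ = (φ r - φ b) / (b - r) * (y - x) := by ring

theorem log_add_sub_log_le {p x ε : ℝ} (hp : 0 < p) (hpx : p ≤ x) (hε : 0 ≤ ε) :
    Real.log (x + ε) - Real.log x ≤ ε / p := by
  have hx : 0 < x := hp.trans_le hpx
  calc Real.log (x + ε) - Real.log x = Real.log ((x + ε) / x) :=
        (Real.log_div (by positivity) hx.ne').symm
    _ ≤ (x + ε) / x - 1 := Real.log_le_sub_one_of_pos (by positivity)
    _ = ε / x := by field_simp; ring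
    _ ≤ ε / p := by gcongr

theorem sum_second_difference_le {w : ℕ → ℝ} {N : ℕ}
    (hw : ∀ j < 2 * N + 1, w j + w (j + 2) ≤ 2 * w (j + 1)) :
    ∑ i ∈ Finset.range (N + 1), (2 * w (2 * i + 1) - w (2 * i) - w (2 * i + 2)) ≤
      (w 1 - w 0) - (w (2 * N + 2) - w (2 * N + 1)) := by
  induction N with
  | zero => simp; linarith
  | succ N ih =>
    rw [Finset.sum_range_succ]
    have hprev := ih fun j hj => hw j (by omega)
    have hlast := hw (2 * N + 1) (by omega)
    rw [mul_add_one 2 N]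
    norm_num [add_assoc] at hprev hlast ⊢
    linarith

-- Along a grid of mesh `(β - α) / (N + 1)`, each increment of `u - w` is bounded by a second
-- difference of `φ` on the grid of half that mesh; these telescope.
theorem sub_sub_sub_le_of_midpoint {φ u w : ℝ → ℝ} {α β L κ : ℝ} (hαβ : α ≤ β)
    (hφ : ConcaveOn ℝ (Icc α β) φ) (hanti : AntitoneOn φ (Icc α β))
    (hLip : ∀ x ∈ Icc α β, ∀ y ∈ Icc α β, x ≤ y → φ x - φ y ≤ L * (y - x))
    (hmid : ∀ x ∈ Icc α β, ∀ y ∈ Icc α β, u x + w y ≤ 2 * φ ((x + y) / 2))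
    (hlow : ∀ x ∈ Icc α β, 2 * φ x - κ ≤ u x + w x) (N : ℕ) :
    (u β - w β) - (u α - w α) ≤ L * (β - α) / (N + 1) + 2 * (N + 1) * κ := by
  have hN : (0 : ℝ) < N + 1 := by positivity
  set s : ℝ := (β - α) / (2 * (N + 1)) with hs
  set x : ℕ → ℝ := fun j => α + j * s with hx
  have hs0 : 0 ≤ s := div_nonneg (by linarith) (by positivity)
  have hx0 : x 0 = α := by simp [hx]
  have hxN : x (2 * (N + 1)) = β := by simp only [hx, hs]; push_cast; field_simp; ring
  have hmono : Monotone x := fun i j hij => by simp only [hx]; gcongr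
  have hmem : ∀ {j}, j ≤ 2 * (N + 1) → x j ∈ Icc α β := fun hj =>
    ⟨hx0 ▸ hmono (Nat.zero_le _), hxN ▸ hmono hj⟩
  have hx_mid : ∀ j, (x (j + 2) + x j) / 2 = x (j + 1) := fun j => by
    simp only [hx]; push_cast; ring
  have hsecond : ∀ j < 2 * N + 1, φ (x j) + φ (x (j + 2)) ≤ 2 * φ (x (j + 1)) := fun j hj => by
    have hhalf := hφ.2 (hmem (j := j + 2) (by omega)) (hmem (j := j) (by omega)) one_half_pos.le
      one_half_pos.le (add_halves 1)
    simp only [smul_eq_mul, one_div_mul_eq_div, ← add_div, hx_mid] at hhalf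
    linarith
  have hincr : ∀ i ∈ Finset.range (N + 1),
      (u (x (2 * (i + 1))) - w (x (2 * (i + 1)))) - (u (x (2 * i)) - w (x (2 * i))) ≤
        2 * (2 * φ (x (2 * i + 1)) - φ (x (2 * i)) - φ (x (2 * i + 2))) + 2 * κ := by
    intro i hi
    have hiN := Finset.mem_range.mp hi
    have hleft : x (2 * i) ∈ Icc α β := hmem (by omega)
    have hright : x (2 * i + 2) ∈ Icc α β := hmem (by omega)
    have hcross := hmid _ hright _ hleft
    rw [hx_mid] at hcross
    rw [mul_add_one 2 i]
    linarith [hlow _ hleft, hlow _ hright]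
  have hsum := Finset.sum_le_sum hincr
  rw [Finset.sum_range_sub (fun i => u (x (2 * i)) - w (x (2 * i))), hxN, mul_zero, hx0,
    Finset.sum_add_distrib, ← Finset.mul_sum, Finset.sum_const, Finset.card_range,
    nsmul_eq_mul] at hsum
  have htele := sum_second_difference_le (w := φ ∘ x) hsecond
  have hfirst : φ (x 1) ≤ φ (x 0) :=
    hanti (hmem (by omega)) (hmem (by omega)) (hmono zero_le_one)
  have hlast := hLip _ (hmem (j := 2 * N + 1) (by omega)) _ (hmem (j := 2 * N + 2) le_rfl)
    (hmono (by omega))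
  have hstep : L * (x (2 * N + 2) - x (2 * N + 1)) = L * (β - α) / (N + 1) / 2 := by
    simp only [hx, hs]; push_cast; field_simp; ring
  simp only [Function.comp_apply] at htele
  push_cast at hsum
  linarith

theorem exists_pos_forall_exists_nat_lt {D B τ : ℝ} (hD : 0 ≤ D) (hB : 0 ≤ B) (hτ : 0 < τ) :
    ∃ η > 0, ∀ t, 0 < t → t ≤ 1 → ∃ N : ℕ, D / (N + 1) + B * (N + 1) * (η * t ^ 2) < 2 * τ * t := by
  set A := (D + 1) / τ with hA
  have hA0 : 0 < A := by positivity
  set η := τ / (B * (A + 2) + 1) with hη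
  have hη0 : 0 < η := by positivity
  refine ⟨η, hη0, fun t ht ht1 => ⟨⌈A / t⌉₊, ?_⟩⟩
  have hceil_ge : A / t ≤ ⌈A / t⌉₊ := Nat.le_ceil _
  have hceil_lt : (⌈A / t⌉₊ : ℝ) < A / t + 1 := Nat.ceil_lt_add_one (by positivity)
  have hfirst : D / (⌈A / t⌉₊ + 1) ≤ τ * t := by
    rw [div_le_iff₀ (by positivity)]
    calc D ≤ τ * t * (A / t) := by
          rw [hA]; field_simp; linarith
      _ ≤ τ * t * (⌈A / t⌉₊ + 1) := by gcongr; linarith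
  have hceil_mul : ((⌈A / t⌉₊ : ℝ) + 1) * t ≤ A + 2 := by
    calc ((⌈A / t⌉₊ : ℝ) + 1) * t ≤ (A / t + 2) * t :=
          mul_le_mul_of_nonneg_right (by linarith) ht.le
      _ = A + 2 * t := by field_simp
      _ ≤ A + 2 := by linarith
  have hsecond : B * (⌈A / t⌉₊ + 1) * (η * t ^ 2) < τ * t := by
    calc B * (⌈A / t⌉₊ + 1) * (η * t ^ 2) = B * ((⌈A / t⌉₊ + 1) * t) * η * t := by ring
      _ ≤ B * (A + 2) * η * t := by gcongr
      _ < (B * (A + 2) + 1) * η * t := by gcongr; linarith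
      _ = τ * t := by rw [hη]; field_simp
  linarith

end RealEstimates

section SlidingCut

/-- A total `H t`, cut at height `c` into an upper part `P (c, t)` and a lower part `Q (c, t)`,
both jointly log-concave. For `|t| ≤ t₀` the part above height `c₁` does not depend on `t`, while
the part below height `c₂ < c₁` slides with speed `τ > 0`. -/
structure IsSlidingCut (P Q : ℝ × ℝ → ℝ) (H : ℝ → ℝ) (t₀ c₁ c₂ τ : ℝ) : Prop where
  t₀_pos : 0 < t₀
  speed_pos : 0 < τ
  c₂_lt_c₁ : c₂ < c₁
  add_eq : ∀ c t, P (c, t) + Q (c, t) = H t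
  antitone_upper : ∀ t, Antitone fun c => P (c, t)
  isLogConcave_upper : IsLogConcave P
  isLogConcave_lower : IsLogConcave Q
  exists_upper_eq_zero : ∃ M, ∀ c t, M ≤ c → P (c, t) = 0
  exists_lower_eq_zero : ∃ m, Q (m, 0) = 0
  upper_eq : ∀ c t, |t| ≤ t₀ → c₁ ≤ c → P (c, t) = P (c, 0)
  lower_eq : ∀ t, |t| ≤ t₀ → Q (c₂ + τ * t, t) = Q (c₂, 0)
  upper_pos : 0 < P (c₁, 0)
  lower_pos : 0 < Q (c₂, 0)
  upper_lt : ∀ c, c₂ < c → P (c, 0) < P (c₂, 0)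

namespace IsSlidingCut

variable {P Q : ℝ × ℝ → ℝ} {H : ℝ → ℝ} {t₀ c₁ c₂ τ : ℝ}

section

variable (h : IsSlidingCut P Q H t₀ c₁ c₂ τ)
include h

theorem upper_eq_sub {t : ℝ} (ht : |t| ≤ t₀) : P (c₂ + τ * t, t) = H t - Q (c₂, 0) := by
  rw [← h.add_eq (c₂ + τ * t) t, h.lower_eq t ht, add_sub_cancel_right]

theorem upper_zero_eq_sub : P (c₂, 0) = H 0 - Q (c₂, 0) := by
  simpa using h.upper_eq_sub (t := 0) (by simpa using h.t₀_pos.le)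

theorem upper_lt_sub : P (c₁, 0) < H 0 - Q (c₂, 0) :=
  h.upper_zero_eq_sub ▸ h.upper_lt c₁ h.c₂_lt_c₁

theorem sub_lower_pos : 0 < H 0 - Q (c₂, 0) :=
  h.upper_pos.trans h.upper_lt_sub

theorem total_pos : 0 < H 0 := by
  linarith [h.sub_lower_pos, h.lower_pos]

theorem bddAbove_setOf_exp_le (t ρ : ℝ) : BddAbove {c | Real.exp ρ ≤ P (c, t)} := by
  obtain ⟨M, hM⟩ := h.exists_upper_eq_zero
  refine ⟨M, fun c hc => le_of_not_ge fun hMc => ?_⟩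
  exact (Real.exp_pos ρ).not_ge (hM c t hMc ▸ hc)

theorem exists_exp_le {ρ : ℝ} (hρ : ρ ≤ Real.log (H 0)) : ∃ c, Real.exp ρ ≤ P (c, 0) := by
  obtain ⟨m, hm⟩ := h.exists_lower_eq_zero
  have hPm : P (m, 0) = H 0 := by rw [← h.add_eq m 0, hm, add_zero]
  exact ⟨m, hPm ▸ (Real.le_log_iff_exp_le h.total_pos).mp hρ⟩

theorem antitoneOn_expLevel :
    AntitoneOn (expLevel fun c => P (c, 0)) (Iic (Real.log (H 0))) := fun _ _ _ hρ' hle =>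
  expLevel_anti (h.bddAbove_setOf_exp_le 0 _) (h.exists_exp_le hρ') hle

theorem concaveOn_expLevel :
    ConcaveOn ℝ (Iic (Real.log (H 0))) (expLevel fun c => P (c, 0)) :=
  _root_.concaveOn_expLevel
    (fun a b ha hb hab c c' => by
      simpa using h.isLogConcave_upper ha hb hab (c, 0) (c', 0))
    (h.bddAbove_setOf_exp_le 0) (h.exists_exp_le le_rfl)

theorem log_sub_lt_log : Real.log (H 0 - Q (c₂, 0)) < Real.log (H 0) :=
  Real.log_lt_log h.sub_lower_pos (by linarith [h.lower_pos])

theorem exists_lipschitz_expLevel : ∃ L ≥ 0, ∀ ρ ρ', ρ ≤ ρ' → ρ' ≤ Real.log (H 0 - Q (c₂, 0)) →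
    expLevel (fun c => P (c, 0)) ρ - expLevel (fun c => P (c, 0)) ρ' ≤ L * (ρ' - ρ) :=
  ⟨_, div_nonneg (sub_nonneg.mpr
      (h.antitoneOn_expLevel h.log_sub_lt_log.le self_mem_Iic h.log_sub_lt_log.le))
      (sub_nonneg.mpr h.log_sub_lt_log.le),
    fun _ _ hle hle' => sub_le_slope_mul_of_concaveOn_Iic h.concaveOn_expLevel hle hle'
      h.log_sub_lt_log⟩

theorem expLevel_log_sub_le :
    expLevel (fun c => P (c, 0)) (Real.log (H 0 - Q (c₂, 0))) ≤ c₂ := by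
  refine expLevel_le (h.exists_exp_le h.log_sub_lt_log.le) fun c hc => le_of_not_gt fun hlt => ?_
  rw [Real.exp_log h.sub_lower_pos, ← h.upper_zero_eq_sub] at hc
  exact (h.upper_lt c hlt).not_ge hc

theorem exists_exp_le_of_le_log {t ρ ε : ℝ} (ht : |t| ≤ t₀) (hε : 0 < H 0 - Q (c₂, 0) - ε)
    (hHt : H 0 - ε < H t) (hρ : ρ ≤ Real.log (H 0 - Q (c₂, 0) - ε)) :
    ∃ c, Real.exp ρ ≤ P (c, t) :=
  ⟨c₂ + τ * t, by
    rw [h.upper_eq_sub ht]; linarith [(Real.le_log_iff_exp_le hε).mp hρ]⟩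

theorem expLevel_add_expLevel_neg_le {t ρ ρ' : ℝ} (hne : ∃ c, Real.exp ρ ≤ P (c, t))
    (hne' : ∃ c, Real.exp ρ' ≤ P (c, -t)) :
    expLevel (fun c => P (c, t)) ρ + expLevel (fun c => P (c, -t)) ρ' ≤
      2 * expLevel (fun c => P (c, 0)) ((ρ + ρ') / 2) := by
  have hhalf := mul_expLevel_add_mul_expLevel_le one_half_pos one_half_pos
    (h.bddAbove_setOf_exp_le 0 _) (fun c c' => by
      simpa using h.isLogConcave_upper one_half_pos one_half_pos (add_halves 1) (c, t) (c', -t))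
    hne hne'
  simp only [one_div_mul_eq_div, ← add_div] at hhalf
  linarith

-- Log-concavity of the lower part `Q = H - P` bounds the levels of `P` from below.
theorem expLevel_log_exp_add_le {t ρ ε : ℝ} (hHt : H 0 - ε < H t) (hHt' : H 0 - ε < H (-t))
    (hε : 0 ≤ ε) (hρ : Real.exp ρ + ε ≤ H 0) :
    expLevel (fun c => P (c, 0)) (Real.log (Real.exp ρ + ε)) ≤
      (expLevel (fun c => P (c, t)) ρ + expLevel (fun c => P (c, -t)) ρ) / 2 := by
  have hpos : 0 < Real.exp ρ + ε := by positivity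
  have hmid : ∀ c c', expLevel (fun c => P (c, t)) ρ < c → expLevel (fun c => P (c, -t)) ρ < c' →
      expLevel (fun c => P (c, 0)) (Real.log (Real.exp ρ + ε)) ≤ (c + c') / 2 := by
    intro c c' hc hc'
    have hupper := lt_exp_of_expLevel_lt (h.bddAbove_setOf_exp_le t ρ) hc
    have hupper' := lt_exp_of_expLevel_lt (h.bddAbove_setOf_exp_le (-t) ρ) hc'
    have hmin : H 0 - ε - Real.exp ρ < min (Q (c, t)) (Q (c', -t)) :=
      lt_min (by linarith [h.add_eq c t]) (by linarith [h.add_eq c' (-t)])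
    have hlower := h.isLogConcave_lower.min_le_midpoint (x := (c, t)) (y := (c', -t))
      (by linarith)
    have hlower' : H 0 - ε - Real.exp ρ < Q ((c + c') / 2, 0) := by
      refine (hmin.trans_le hlower).trans_eq (congrArg Q ?_)
      ext <;> simp; ring
    refine expLevel_le (h.exists_exp_le (Real.log_le_log hpos hρ)) fun x hx => ?_
    rw [Real.exp_log hpos] at hx
    refine le_of_not_gt fun hlt => ?_
    linarith [h.antitone_upper 0 hlt.le, h.add_eq ((c + c') / 2) 0]
  refine le_of_forall_pos_le_add fun e he => ?_
  linarith [hmid _ _ (lt_add_of_pos_right _ he) (lt_add_of_pos_right _ he)]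

theorem two_mul_speed_mul_sub_le {L t ε : ℝ}
    (hLip : ∀ ρ ρ', ρ ≤ ρ' → ρ' ≤ Real.log (H 0 - Q (c₂, 0)) →
      expLevel (fun c => P (c, 0)) ρ - expLevel (fun c => P (c, 0)) ρ' ≤ L * (ρ' - ρ))
    (hL : 0 ≤ L) (ht : |t| ≤ t₀) (hε : 0 ≤ ε) (hεp : P (c₁, 0) + ε < H 0 - Q (c₂, 0))
    (hHt : H 0 - ε < H t) (hHt' : H 0 - ε < H (-t)) :
    2 * τ * t - 2 * (L / P (c₁, 0)) * ε ≤
      expLevel (fun c => P (c, t)) (Real.log (H 0 - Q (c₂, 0) - ε)) -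
      expLevel (fun c => P (c, -t)) (Real.log (H 0 - Q (c₂, 0) - ε)) := by
  have hpos : 0 < H 0 - Q (c₂, 0) - ε := by linarith [h.upper_pos]
  set β := Real.log (H 0 - Q (c₂, 0) - ε) with hβ
  have hbottom : c₂ + τ * t ≤ expLevel (fun c => P (c, t)) β :=
    le_expLevel (h.bddAbove_setOf_exp_le t β) (by
      rw [h.upper_eq_sub ht, hβ, Real.exp_log hpos]; linarith)
  have hmid := h.expLevel_add_expLevel_neg_le
    (h.exists_exp_le_of_le_log ht hpos hHt le_rfl)
    (h.exists_exp_le_of_le_log (by rwa [abs_neg]) hpos hHt' le_rfl)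
  rw [add_self_div_two] at hmid
  have hdrop := hLip β _ (Real.log_le_log hpos (by linarith)) le_rfl
  have hlog := log_add_sub_log_le h.upper_pos (x := H 0 - Q (c₂, 0) - ε) (by linarith) hε
  rw [sub_add_cancel] at hlog
  have hdrop' : L * (Real.log (H 0 - Q (c₂, 0)) - β) ≤ L / P (c₁, 0) * ε := by
    rw [div_mul_comm, mul_comm]; gcongr
  linarith [h.expLevel_log_sub_le]

theorem two_mul_expLevel_sub_le {L t ε ρ : ℝ}
    (hLip : ∀ ρ ρ', ρ ≤ ρ' → ρ' ≤ Real.log (H 0 - Q (c₂, 0)) →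
      expLevel (fun c => P (c, 0)) ρ - expLevel (fun c => P (c, 0)) ρ' ≤ L * (ρ' - ρ))
    (hL : 0 ≤ L) (hε : 0 ≤ ε) (hHt : H 0 - ε < H t) (hHt' : H 0 - ε < H (-t))
    (hρ : P (c₁, 0) ≤ Real.exp ρ) (hρ' : Real.exp ρ + ε ≤ H 0 - Q (c₂, 0)) :
    2 * expLevel (fun c => P (c, 0)) ρ - 2 * (L / P (c₁, 0)) * ε ≤
      expLevel (fun c => P (c, t)) ρ + expLevel (fun c => P (c, -t)) ρ := by
  have hlower := h.expLevel_log_exp_add_le hHt hHt' hε (by linarith [h.lower_pos])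
  have hlog := log_add_sub_log_le h.upper_pos hρ hε
  rw [Real.log_exp] at hlog
  have hdrop := hLip ρ (Real.log (Real.exp ρ + ε))
    ((Real.le_log_iff_exp_le (by positivity)).mpr (by linarith))
    (Real.log_le_log (by positivity) hρ')
  have hdrop' : L * (Real.log (Real.exp ρ + ε) - ρ) ≤ L / P (c₁, 0) * ε := by
    rw [div_mul_comm, mul_comm]; gcongr
  linarith

theorem two_mul_speed_mul_le {L t ε : ℝ}
    (hLip : ∀ ρ ρ', ρ ≤ ρ' → ρ' ≤ Real.log (H 0 - Q (c₂, 0)) →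
      expLevel (fun c => P (c, 0)) ρ - expLevel (fun c => P (c, 0)) ρ' ≤ L * (ρ' - ρ))
    (hL : 0 ≤ L) (ht : |t| ≤ t₀) (hε : 0 ≤ ε) (hεp : P (c₁, 0) + ε < H 0 - Q (c₂, 0))
    (hHt : H 0 - ε < H t) (hHt' : H 0 - ε < H (-t)) (N : ℕ) :
    2 * τ * t ≤ L * (Real.log (H 0 - Q (c₂, 0)) - Real.log (P (c₁, 0))) / (N + 1) +
      6 * (L / P (c₁, 0)) * (N + 1) * ε := by
  have ht' : |-t| ≤ t₀ := by rwa [abs_neg]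
  have hpos : 0 < H 0 - Q (c₂, 0) - ε := by linarith [h.upper_pos]
  set α := Real.log (P (c₁, 0))
  set β := Real.log (H 0 - Q (c₂, 0) - ε)
  have hexpα : Real.exp α = P (c₁, 0) := Real.exp_log h.upper_pos
  have hαβ : α ≤ β := Real.log_le_log h.upper_pos (by linarith)
  have hββ' : β ≤ Real.log (H 0 - Q (c₂, 0)) := Real.log_le_log hpos (by linarith)
  have hsub : Icc α β ⊆ Iic (Real.log (H 0)) := fun x hx =>
    hx.2.trans (hββ'.trans h.log_sub_lt_log.le)
  have hexp_le : ∀ {x}, x ≤ β → Real.exp x ≤ H 0 - Q (c₂, 0) - ε := fun hx =>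
    (Real.le_log_iff_exp_le hpos).mp hx
  have hmixed := sub_sub_sub_le_of_midpoint hαβ
    (h.concaveOn_expLevel.subset hsub (convex_Icc α β)) (h.antitoneOn_expLevel.mono hsub)
    (fun x _ y hy hxy => hLip x y hxy (hy.2.trans hββ'))
    (fun x hx y hy => h.expLevel_add_expLevel_neg_le
      (h.exists_exp_le_of_le_log ht hpos hHt hx.2) (h.exists_exp_le_of_le_log ht' hpos hHt' hy.2))
    (fun x hx => h.two_mul_expLevel_sub_le hLip hL hε hHt hHt'
      (hexpα ▸ Real.exp_le_exp.mpr hx.1) (by linarith [hexp_le hx.2])) N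
  have htop : expLevel (fun c => P (c, t)) α = expLevel (fun c => P (c, -t)) α :=
    expLevel_eq_of_eqOn_Ici (h.bddAbove_setOf_exp_le t α) (h.bddAbove_setOf_exp_le (-t) α)
      (fun c hc => (h.upper_eq c t ht hc).trans (h.upper_eq c (-t) ht' hc).symm)
      (by rw [h.upper_eq c₁ t ht le_rfl, hexpα])
  have hbottom := h.two_mul_speed_mul_sub_le hLip hL ht hε hεp hHt hHt'
  have hcoarse : L * (β - α) / (N + 1) ≤
      L * (Real.log (H 0 - Q (c₂, 0)) - α) / (N + 1) := by gcongr
  have hκ : 0 ≤ L / P (c₁, 0) * ε := mul_nonneg (div_nonneg hL h.upper_pos.le) hε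
  have hκN : 0 ≤ N * (L / P (c₁, 0) * ε) := by positivity
  rw [htop, sub_self, sub_zero] at hmixed
  linarith

end

theorem exists_sub_mul_sq_gt (h : IsSlidingCut P Q H t₀ c₁ c₂ τ) :
    ∃ η > 0, ∀ t₁ > 0, ∃ t, |t| < t₁ ∧ H t < H 0 - η * t ^ 2 := by
  obtain ⟨L, hL, hLip⟩ := h.exists_lipschitz_expLevel
  have hgap : 0 < H 0 - Q (c₂, 0) - P (c₁, 0) := sub_pos.mpr h.upper_lt_sub
  obtain ⟨η, hη, hN⟩ := exists_pos_forall_exists_nat_lt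
    (D := L * (Real.log (H 0 - Q (c₂, 0)) - Real.log (P (c₁, 0)))) (B := 6 * (L / P (c₁, 0)))
    (mul_nonneg hL (sub_nonneg.mpr (Real.log_le_log h.upper_pos h.upper_lt_sub.le)))
    (mul_nonneg (by norm_num) (div_nonneg hL h.upper_pos.le)) h.speed_pos
  refine ⟨η / 2, half_pos hη, fun t₁ ht₁ => ?_⟩
  by_contra! hflat
  obtain ⟨t, ⟨htt₁, htt₀, ht1, htη⟩, ht⟩ : ∃ t : ℝ, (t < t₁ ∧ t < t₀ ∧ t < 1 ∧
      η * t ^ 2 < H 0 - Q (c₂, 0) - P (c₁, 0)) ∧ 0 < t := by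
    have hsmall : ∀ᶠ t in 𝓝 (0 : ℝ), t < t₁ ∧ t < t₀ ∧ t < 1 ∧
        η * t ^ 2 < H 0 - Q (c₂, 0) - P (c₁, 0) := by
      have hsq : Filter.Tendsto (fun t : ℝ => η * t ^ 2) (𝓝 0) (𝓝 0) := by
        simpa using ((continuous_id.pow 2).const_mul η).tendsto (0 : ℝ)
      filter_upwards [gt_mem_nhds ht₁, gt_mem_nhds h.t₀_pos, gt_mem_nhds one_pos,
        hsq.eventually (gt_mem_nhds hgap)] using by tauto
    exact ((hsmall.filter_mono nhdsWithin_le_nhds).and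
      (self_mem_nhdsWithin (s := Ioi (0 : ℝ)))).exists
  have hηt : 0 < η * t ^ 2 := by positivity
  obtain ⟨N, hlt⟩ := hN t ht ht1.le
  have hHt := hflat t (by rwa [abs_of_pos ht])
  have hHt' := hflat (-t) (by rwa [abs_neg, abs_of_pos ht])
  rw [neg_sq] at hHt'
  exact hlt.not_ge (h.two_mul_speed_mul_le hLip hL (by rw [abs_of_pos ht]; exact htt₀.le) hηt.le
    (by linarith) (by linarith) (by linarith) N)

end IsSlidingCut

end SlidingCut

theorem contDiffAt_of_forall_clm_apply {X V D : Type*} [NormedAddCommGroup X] [NormedSpace ℝ X]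
    [FiniteDimensional ℝ X] [NormedAddCommGroup V] [NormedSpace ℝ V] [NormedAddCommGroup D]
    [NormedSpace ℝ D] {k : WithTop ℕ∞} {f : D → X →L[ℝ] V} {x₀ : D}
    (hf : ∀ y, ContDiffAt ℝ k (fun x => f x y) x₀) : ContDiffAt ℝ k f x₀ := by
  let b := Module.finBasis ℝ X
  have hsum : f = fun x => ∑ i, (b.coord i).toContinuousLinearMap.smulRight (f x (b i)) := by
    ext x y
    conv_lhs => rw [← b.sum_repr y]
    simp [-Module.Basis.sum_repr]
  rw [hsum]
  exact ContDiffAt.sum fun i _ =>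
    ((ContinuousLinearMap.smulRightL ℝ X V
      (b.coord i).toContinuousLinearMap).contDiff.contDiffAt).comp x₀ (hf (b i))

section ParametricContinuity

variable {X V Q : Type*} [TopologicalSpace X] [NormedAddCommGroup V] [TopologicalSpace Q]
  {P : Set Q} {f : X × Q → V} {x₀ : X}

theorem continuousOn_prodMk_of_continuousAt (hf : ∀ q ∈ P, ContinuousAt f (x₀, q)) :
    ContinuousOn (fun q => f (x₀, q)) P := fun q hq =>
  ((hf q hq).comp (f := fun q => (x₀, q)) (by fun_prop)).continuousWithinAt

theorem exists_eventually_forall_continuousAt_norm_le (hP : IsCompact P)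
    (hf : ∀ q ∈ P, ∀ᶠ z in 𝓝 (x₀, q), ContinuousAt f z) :
    ∃ B, ∀ᶠ x in 𝓝 x₀, ∀ q ∈ P, ContinuousAt f (x, q) ∧ ‖f (x, q)‖ ≤ B := by
  obtain ⟨B, hB⟩ := hP.exists_bound_of_continuousOn
    (continuousOn_prodMk_of_continuousAt fun q hq => (hf q hq).self_of_nhds)
  refine ⟨B + 1, hP.eventually_forall_of_forall_eventually fun q hq => ?_⟩
  have hlt : ‖f (x₀, q)‖ < B + 1 := (hB q hq).trans_lt (lt_add_one B)
  exact (hf q hq).and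
    (((hf q hq).self_of_nhds.norm.eventually (gt_mem_nhds hlt)).mono fun z hz => hz.le)

theorem continuousAt_setIntegral [NormedSpace ℝ V] [FirstCountableTopology X]
    [TopologicalSpace.PseudoMetrizableSpace Q] [MeasurableSpace Q] [OpensMeasurableSpace Q]
    [T2Space Q]
    {ν : Measure Q} [IsFiniteMeasureOnCompacts ν] (hP : IsCompact P)
    (hf : ∀ q ∈ P, ∀ᶠ z in 𝓝 (x₀, q), ContinuousAt f z) :
    ContinuousAt (fun x => ∫ q in P, f (x, q) ∂ν) x₀ := by
  obtain ⟨B, hB⟩ := exists_eventually_forall_continuousAt_norm_le hP hf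
  refine continuousAt_of_dominated (bound := fun _ => B) ?_ ?_
    (integrableOn_const hP.measure_ne_top) ?_
  · exact hB.mono fun x hx => ContinuousOn.aestronglyMeasurable_of_isCompact
      (continuousOn_prodMk_of_continuousAt fun q hq => (hx q hq).1) hP hP.measurableSet
  · filter_upwards [hB] with x hx
    filter_upwards [ae_restrict_mem hP.measurableSet] with q hq using (hx q hq).2
  · filter_upwards [ae_restrict_mem hP.measurableSet] with q hq
    exact (hf q hq).self_of_nhds.comp (f := fun x => (x, q)) (by fun_prop)

end ParametricContinuity

section ParametricIntegral

variable {X V Q : Type*} [NormedAddCommGroup X] [NormedSpace ℝ X] [NormedAddCommGroup V]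
  [NormedSpace ℝ V] [NormedAddCommGroup Q] [NormedSpace ℝ Q] [MeasurableSpace Q]
  [OpensMeasurableSpace Q] {ν : Measure Q} [IsFiniteMeasureOnCompacts ν] {P : Set Q}
  {f : X × Q → V} {x₀ : X}

theorem hasFDerivAt_setIntegral (hP : IsCompact P) (hf : ∀ q ∈ P, ContDiffAt ℝ 1 f (x₀, q)) :
    HasFDerivAt (fun x => ∫ q in P, f (x, q) ∂ν)
      (∫ q in P, (fderiv ℝ f (x₀, q)).comp (.inl ℝ X Q) ∂ν) x₀ := by
  have hev : ∀ q ∈ P, ∀ᶠ z in 𝓝 (x₀, q), ContDiffAt ℝ 1 f z := fun q hq =>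
    (hf q hq).eventually (by simp)
  have hcont : ∀ᶠ x in 𝓝 x₀, ∀ q ∈ P, ContDiffAt ℝ 1 f (x, q) :=
    hP.eventually_forall_of_forall_eventually hev
  obtain ⟨B, hB⟩ := exists_eventually_forall_continuousAt_norm_le (x₀ := x₀)
    (f := fun z => (fderiv ℝ f z).comp (.inl ℝ X Q)) hP fun q hq => (hev q hq).mono fun z hz =>
      (hz.fderiv_right (m := 0) le_rfl).continuousAt.clm_comp continuousAt_const
  refine hasFDerivAt_integral_of_dominated_of_fderiv_le (F := fun x q => f (x, q))
    (F' := fun x q => (fderiv ℝ f (x, q)).comp (.inl ℝ X Q)) (bound := fun _ => B)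
    (hcont.and hB) ?_ ?_ ?_ ?_ (integrableOn_const hP.measure_ne_top) ?_
  · exact hcont.mono fun x hx => ContinuousOn.aestronglyMeasurable_of_isCompact
      (continuousOn_prodMk_of_continuousAt fun q hq => (hx q hq).continuousAt) hP
      hP.measurableSet
  · exact (continuousOn_prodMk_of_continuousAt fun q hq =>
      (hf q hq).continuousAt).integrableOn_compact hP
  · exact (continuousOn_prodMk_of_continuousAt fun q hq =>
      (hB.self_of_nhds q hq).1).aestronglyMeasurable_of_isCompact hP hP.measurableSet
  · filter_upwards [ae_restrict_mem hP.measurableSet] with q hq x hx using (hx.2 q hq).2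
  · filter_upwards [ae_restrict_mem hP.measurableSet] with q hq x hx
    exact ((hx.1 q hq).differentiableAt one_ne_zero).hasFDerivAt.comp x
      (hasFDerivAt_prodMk_left x q)

theorem contDiffAt_setIntegral [FiniteDimensional ℝ X] [CompleteSpace V] (k : ℕ)
    (hP : IsCompact P) (hf : ∀ q ∈ P, ContDiffAt ℝ k f (x₀, q)) :
    ContDiffAt ℝ k (fun x => ∫ q in P, f (x, q) ∂ν) x₀ := by
  have hev : ∀ᶠ x in 𝓝 x₀, ∀ q ∈ P, ContDiffAt ℝ k f (x, q) :=
    hP.eventually_forall_of_forall_eventually fun q hq => (hf q hq).eventually (by simp)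
  induction k generalizing f with
  | zero =>
    refine contDiffAt_zero.mpr ⟨_, hev.eventually_nhds, fun x hx => ?_⟩
    refine (continuousAt_setIntegral hP fun q hq => ?_).continuousWithinAt
    exact ((hx.self_of_nhds q hq).eventually (by simp)).mono fun z hz => hz.continuousAt
  | succ k ih =>
    push_cast at hf hev ⊢
    refine contDiffAt_succ_iff_hasFDerivAt.mpr
      ⟨fun x => ∫ q in P, (fderiv ℝ f (x, q)).comp (.inl ℝ X Q) ∂ν, ⟨_, hev, fun x hx =>
        hasFDerivAt_setIntegral hP fun q hq => (hx q hq).of_le le_add_self⟩, ?_⟩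
    refine contDiffAt_of_forall_clm_apply fun y => ?_
    have hpartial : ∀ x, (∀ q ∈ P, ContDiffAt ℝ (k + 1) f (x, q)) →
        ∀ q ∈ P, ContDiffAt ℝ k (fun z => fderiv ℝ f z (y, 0)) (x, q) := fun x hx q hq =>
      (hx q hq).fderiv_right_succ.clm_apply contDiffAt_const
    refine (ih (hpartial x₀ hf) (hev.mono hpartial)).congr_of_eventuallyEq ?_
    filter_upwards [hev] with x hx
    refine ContinuousLinearMap.integral_apply ?_ y
    exact (continuousOn_prodMk_of_continuousAt
      (f := fun z => (fderiv ℝ f z).comp (.inl ℝ X Q)) fun q hq =>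
        (hx q hq).fderiv_right_succ.continuousAt.clm_comp
          continuousAt_const).integrableOn_compact hP

end ParametricIntegral

theorem contDiffAt_of_forall_zero {X : Type*} [NormedAddCommGroup X] [NormedSpace ℝ X]
    [CompleteSpace X] {k : WithTop ℕ∞} (hk : k ≠ 0) {G : X × ℝ → ℝ} {φ : X → ℝ} {u₀ : X} {d : ℝ}
    (hG : ContDiffAt ℝ k G (u₀, φ u₀)) (hzero : G (u₀, φ u₀) = 0)
    (hderiv : HasDerivAt (fun t => G (u₀, t)) d (φ u₀)) (hd : d ≠ 0)
    (huniq : ∀ᶠ z in 𝓝 (u₀, φ u₀), G z = 0 → z.2 = φ z.1) : ContDiffAt ℝ k φ u₀ := by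
  have hpartial : fderiv ℝ G (u₀, φ u₀) (0, 1) = d :=
    ((hG.differentiableAt hk).hasFDerivAt.comp_hasDerivAt (φ u₀)
      ((hasDerivAt_const (φ u₀) u₀).prodMk (hasDerivAt_id (φ u₀)))).unique hderiv
  have hinv : (fderiv ℝ G (u₀, φ u₀) ∘L .inr ℝ X ℝ).IsInvertible := by
    refine ⟨ContinuousLinearEquiv.unitsEquivAut ℝ (Units.mk0 _ (hpartial.trans_ne hd)), ?_⟩
    ext
    simp
  set ψ := hG.implicitFunction hk hinv with hψ_def
  have hψ : ContDiffAt ℝ k ψ u₀ := hG.contDiffAt_implicitFunction hk hinv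
  refine hψ.congr_of_eventuallyEq ?_
  have hψ_zero : ∀ᶠ x in 𝓝 u₀, G (x, ψ x) = G (u₀, φ u₀) :=
    hG.eventually_apply_implicitFunction hk hinv
  have hgraph : Filter.Tendsto (fun x => (x, ψ x)) (𝓝 u₀) (𝓝 (u₀, φ u₀)) := by
    have hψ_tendsto := hψ.continuousAt.tendsto
    rw [hψ_def, hG.implicitFunction_apply_self hk hinv] at hψ_tendsto
    exact Filter.tendsto_id.prodMk_nhds hψ_tendsto
  filter_upwards [hψ_zero, hgraph.eventually huniq] with x hx hxφ
  exact (hxφ (hx.trans hzero)).symm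

section Line

variable {E V : Type*} [NormedAddCommGroup E] [NormedSpace ℝ E] [NormedAddCommGroup V]
  [NormedSpace ℝ V] {p v : E}

theorem tendsto_add_smul_nhds_zero (p v : E) :
    Filter.Tendsto (fun t : ℝ => p + t • v) (𝓝 0) (𝓝 p) :=
  Continuous.tendsto' (by fun_prop) 0 p (by simp)

theorem hasDerivAt_comp_line {f : E → V} {t : ℝ} (hf : DifferentiableAt ℝ f (p + t • v)) :
    HasDerivAt (fun t : ℝ => f (p + t • v)) (fderiv ℝ f (p + t • v) v) t := by
  have hline : HasDerivAt (fun t : ℝ => p + t • v) v t := by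
    simpa using ((hasDerivAt_id t).smul_const v).const_add p
  exact hf.hasFDerivAt.comp_hasDerivAt t hline

theorem hasDerivAt_deriv_comp_line {f : E → ℝ} (hf : ContDiffAt ℝ 2 f p) (v : E) :
    HasDerivAt (deriv fun t : ℝ => f (p + t • v)) (fderiv ℝ (fderiv ℝ f) p v v) 0 := by
  have hderiv : ∀ᶠ t : ℝ in 𝓝 0,
      deriv (fun t : ℝ => f (p + t • v)) t = fderiv ℝ f (p + t • v) v := by
    filter_upwards [(tendsto_add_smul_nhds_zero p v).eventually (hf.eventually (by simp))]
      with t ht using (hasDerivAt_comp_line (ht.differentiableAt two_ne_zero)).deriv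
  have hfderiv : DifferentiableAt ℝ (fderiv ℝ f) (p + (0 : ℝ) • v) := by
    rw [zero_smul, add_zero]
    exact (hf.fderiv_right (m := 1) (by norm_num)).differentiableAt one_ne_zero
  have happly := (hasDerivAt_comp_line hfderiv).clm_apply (hasDerivAt_const (0 : ℝ) v)
  simp only [zero_smul, add_zero, map_zero] at happly
  exact happly.congr_of_eventuallyEq hderiv

theorem exists_sub_mul_sq_le_of_fderiv_fderiv_nonneg {f : E → ℝ} (hf : ContDiffAt ℝ 2 f p)
    (hfst : fderiv ℝ f p v = 0) (hsnd : 0 ≤ fderiv ℝ (fderiv ℝ f) p v v) {η : ℝ} (hη : 0 < η) :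
    ∃ t₁ > 0, ∀ t : ℝ, |t| < t₁ → f p - η * t ^ 2 ≤ f (p + t • v) := by
  have hfirst : ∀ᶠ t : ℝ in 𝓝 0, HasDerivAt (fun t : ℝ => f (p + t • v) + η * t ^ 2)
      (deriv (fun t : ℝ => f (p + t • v)) t + 2 * η * t) t := by
    filter_upwards [(tendsto_add_smul_nhds_zero p v).eventually (hf.eventually (by simp))]
      with t ht
    have hline := (hasDerivAt_comp_line (ht.differentiableAt two_ne_zero)).differentiableAt
    have hsq := (hasDerivAt_pow 2 t).const_mul η
    exact (hline.hasDerivAt.add hsq).congr_deriv (by push_cast; ring)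
  have hsecond : HasDerivAt (deriv fun t : ℝ => f (p + t • v) + η * t ^ 2)
      (fderiv ℝ (fderiv ℝ f) p v v + 2 * η) 0 := by
    refine HasDerivAt.congr_of_eventuallyEq ?_ (hfirst.mono fun t ht => ht.deriv)
    exact (hasDerivAt_deriv_comp_line hf v).add
      (by simpa using (hasDerivAt_id (0 : ℝ)).const_mul (2 * η))
  have hcrit : deriv (fun t : ℝ => f (p + t • v) + η * t ^ 2) 0 = 0 := by
    have hline := hasDerivAt_comp_line (p := p) (v := v) (t := 0) (f := f)
      (by simpa using hf.differentiableAt two_ne_zero)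
    rw [hfirst.self_of_nhds.deriv, hline.deriv]
    simpa using hfst
  have hmin := isLocalMin_of_deriv_deriv_pos (by rw [hsecond.deriv]; positivity) hcrit
    hfirst.self_of_nhds.continuousAt
  obtain ⟨t₁, ht₁, hball⟩ := Metric.eventually_nhds_iff.mp hmin
  refine ⟨t₁, ht₁, fun t ht => ?_⟩
  have hle := hball (y := t) (by simpa using ht)
  simp only [zero_smul, add_zero, ne_eq, OfNat.ofNat_ne_zero, not_false_eq_true, zero_pow,
    mul_zero] at hle
  linarith

end Line

section Boundary

variable {E : Type*} [NormedAddCommGroup E] [NormedSpace ℝ E] {K : Set E}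

theorem clm_sub_neg_of_nonpos {U : Set E} (hU : IsOpen U) {p : E}
    {L : E →L[ℝ] ℝ} (hL : L ≠ 0) (hle : ∀ z ∈ U, L (z - p) ≤ 0) {z : E} (hz : z ∈ U) :
    L (z - p) < 0 := by
  refine (hle z hz).lt_of_ne fun h0 => hL ?_
  have hmax : IsLocalMax (fun y => L (y - p)) z := by
    filter_upwards [hU.mem_nhds hz] with y hy
    rw [h0]
    exact hle y hy
  exact hmax.hasFDerivAt_eq_zero (L.hasFDerivAt.comp z ((hasFDerivAt_id z).sub_const p))

theorem HasC2PositiveCurvatureBoundary.exists_local_definingFunction (hK : Convex ℝ K)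
    (h : HasC2PositiveCurvatureBoundary K) {p : E} (hp : p ∈ frontier K) :
    ∃ g : E → ℝ, ContDiffAt ℝ 2 g p ∧ (∀ᶠ x in 𝓝 p, x ∈ frontier K ↔ g x = 0) ∧
      (∀ z ∈ interior K, fderiv ℝ g p (z - p) < 0) ∧
      ∀ v : E, v ≠ 0 → fderiv ℝ g p v = 0 → 0 < fderiv ℝ (fderiv ℝ g) p v v := by
  obtain ⟨g, U, hU, hfU, hg, hfr, hint, hcurv⟩ := h
  have hUp : U ∈ 𝓝 p := hU.mem_nhds (hfU hp)
  have hgp : ContDiffAt ℝ 2 g p := hg.contDiffAt hUp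
  have hmax : IsLocalMaxOn g (closure K) p := by
    filter_upwards [mem_nhdsWithin_of_mem_nhds hUp, self_mem_nhdsWithin] with x hxU hxK
    rw [(hfr p (hfU hp)).mp hp]
    rcases closure_eq_interior_union_frontier K ▸ hxK with hx | hx
    exacts [(hint x hxU hx).le, ((hfr x hxU).mp hx).le]
  have hle : ∀ z ∈ interior K, fderiv ℝ g p (z - p) ≤ 0 := fun z hz =>
    hmax.hasFDerivWithinAt_nonpos (hgp.differentiableAt two_ne_zero).hasFDerivAt.hasFDerivWithinAt
      (sub_mem_posTangentConeAt_of_segment_subset (hK.closure.segment_subset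
        (frontier_subset_closure hp) (interior_subset_closure hz)))
  refine ⟨g, hgp, Filter.mem_of_superset hUp hfr, fun z hz =>
    clm_sub_neg_of_nonpos isOpen_interior (hcurv p hp).1 hle hz, fun v hv hv0 => ?_⟩
  have hpos := (hcurv p hp).2 v hv hv0
  rwa [iteratedFDeriv_two_apply] at hpos

theorem HasC2PositiveCurvatureBoundary.not_eventually_mem_frontier (hK : Convex ℝ K)
    (h : HasC2PositiveCurvatureBoundary K) (p : E) {v : E} (hv : v ≠ 0) :
    ¬ ∀ᶠ t : ℝ in 𝓝 0, p + t • v ∈ frontier K := by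
  intro hline
  obtain ⟨g, hg, hfr, -, hcurv⟩ :=
    h.exists_local_definingFunction hK (by simpa using hline.self_of_nhds)
  have hzero : (fun t : ℝ => g (p + t • v)) =ᶠ[𝓝 0] fun _ => 0 := by
    filter_upwards [hline, (tendsto_add_smul_nhds_zero p v).eventually hfr] with t ht hiff
      using hiff.mp ht
  have hfst : fderiv ℝ g p v = 0 := by
    have hderiv := hasDerivAt_comp_line (p := p) (v := v) (t := 0) (f := g)
      (by simpa using hg.differentiableAt two_ne_zero)
    simpa [hzero.deriv_eq] using hderiv.deriv.symm
  have hsnd : fderiv ℝ (fderiv ℝ g) p v v = 0 := by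
    rw [← (hasDerivAt_deriv_comp_line hg v).deriv, hzero.deriv.deriv_eq]
    simp
  exact (hcurv v hv hfst).ne' hsnd

theorem HasC2PositiveCurvatureBoundary.strictConvex (hK : Convex ℝ K) (hKc : IsClosed K)
    (h : HasC2PositiveCurvatureBoundary K) : StrictConvex ℝ K := by
  refine hK.strictConvex' fun x hx y hy hxy => ?_
  by_contra! hline
  refine h.not_eventually_mem_frontier hK (AffineMap.lineMap x y (1 / 2 : ℝ))
    (sub_ne_zero.mpr hxy.symm) ?_
  filter_upwards [Ioo_mem_nhds (show (-(1 / 2) : ℝ) < 0 by norm_num) one_half_pos] with t ht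
  have hpoint : AffineMap.lineMap x y (1 / 2 : ℝ) + t • (y - x) =
      AffineMap.lineMap x y (1 / 2 + t) := by
    simp only [AffineMap.lineMap_apply_module]
    module
  rw [hpoint, hKc.frontier_eq]
  exact ⟨hK.lineMap_mem hx.1 hy.1 ⟨by linarith [ht.1], by linarith [ht.2]⟩, hline _⟩

end Boundary

/-- The intersection `K ∩ (x + K)` of a set with its translate. -/
def translateInter {E : Type*} [Sub E] (K : Set E) (x : E) : Set E := {z | z ∈ K ∧ z - x ∈ K}

theorem isCompact_translateInter {E : Type*} [Sub E] [TopologicalSpace E] [ContinuousSub E]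
    [T2Space E] {K : Set E} (hKc : IsCompact K) (x : E) : IsCompact (translateInter K x) :=
  hKc.inter_right (hKc.isClosed.preimage (by fun_prop))

theorem translateInter_subset {E : Type*} [Sub E] {K : Set E} {x : E} : translateInter K x ⊆ K :=
  fun _ hz => hz.1

section Chord

variable {E : Type*} [NormedAddCommGroup E] [NormedSpace ℝ E] {K : Set E}

/-- The largest `s` for which the point `z + s • x` of the line through `z` in direction `x`
lies in `K`. -/
noncomputable def rayEnd (K : Set E) (z x : E) : ℝ := sSup {s : ℝ | z + s • x ∈ K}

/-- The length, in multiples of `x`, of the chord of `K` on the line through `z` in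
direction `x`. -/
noncomputable def chordLength (K : Set E) (z x : E) : ℝ := rayEnd K z x + rayEnd K z (-x)

/-- The pairs `(z, x)` for which the line through `z` in direction `x` meets the interior
of `K`. -/
def crossing (K : Set E) : Set (E × E) := {u | ∃ s : ℝ, u.1 + s • u.2 ∈ interior K}

/-- The union of the lines in direction `x` which meet the interior of `K ∩ (x + K)`. -/
def overlap (K : Set E) (x : E) : Set E :=
  {z | ∃ s : ℝ, z + s • x ∈ interior K ∧ z + (s - 1) • x ∈ interior K}

theorem isOpen_crossing : IsOpen (crossing K) := by
  simp only [crossing, ofPred_exists]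
  exact isOpen_iUnion fun s => isOpen_interior.preimage (by fun_prop)

theorem crossing_neg {z x : E} (h : (z, x) ∈ crossing K) : (z, -x) ∈ crossing K := by
  obtain ⟨s, hs⟩ := h
  exact ⟨-s, by simpa using hs⟩

theorem convex_crossing (hK : Convex ℝ K) (x : E) : Convex ℝ {z | (z, x) ∈ crossing K} := by
  rintro z ⟨s, hs⟩ w ⟨r, hr⟩ a b ha hb hab
  refine ⟨a * s + b * r, ?_⟩
  convert hK.interior hs hr ha hb hab using 1
  module

theorem isOpen_overlap (x : E) : IsOpen (overlap K x) := by
  simp only [overlap, ofPred_exists]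
  exact isOpen_iUnion fun s => (isOpen_interior.preimage (by fun_prop)).inter
    (isOpen_interior.preimage (by fun_prop))

theorem add_smul_mem_translateInter_iff {z x : E} {s : ℝ} :
    z + s • x ∈ translateInter K x ↔ z + s • x ∈ K ∧ z + (s - 1) • x ∈ K := by
  rw [show z + (s - 1) • x = z + s • x - x by module]
  rfl

theorem bddAbove_ray (hK : Bornology.IsBounded K) {x : E} (hx : x ≠ 0) (z : E) :
    BddAbove {s : ℝ | z + s • x ∈ K} := by
  obtain ⟨R, hR⟩ := hK.exists_norm_le
  refine ⟨(R + ‖z‖) / ‖x‖, fun s hs => ?_⟩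
  rw [le_div_iff₀ (norm_pos_iff.mpr hx)]
  calc s * ‖x‖ ≤ ‖s • x‖ := by
        rw [norm_smul]; exact mul_le_mul_of_nonneg_right (le_abs_self s) (norm_nonneg x)
    _ ≤ ‖z + s • x‖ + ‖z‖ := by simpa using norm_sub_le (z + s • x) z
    _ ≤ R + ‖z‖ := by gcongr; exact hR _ hs

theorem le_rayEnd (hK : Bornology.IsBounded K) {z x : E} (hx : x ≠ 0) {s : ℝ}
    (hs : z + s • x ∈ K) : s ≤ rayEnd K z x :=
  le_csSup (bddAbove_ray hK hx z) hs

theorem neg_rayEnd_neg_le (hK : Bornology.IsBounded K) {z x : E} (hx : x ≠ 0) {s : ℝ}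
    (hs : z + s • x ∈ K) : -rayEnd K z (-x) ≤ s :=
  neg_le.mp (le_rayEnd hK (neg_ne_zero.mpr hx) (by simpa using hs))

theorem rayEnd_mem (hK : IsCompact K) {z x : E} (hx : x ≠ 0) {s : ℝ} (hs : z + s • x ∈ K) :
    z + rayEnd K z x • x ∈ K :=
  IsClosed.csSup_mem (s := {s : ℝ | z + s • x ∈ K}) (hK.isClosed.preimage (by fun_prop)) ⟨s, hs⟩
    (bddAbove_ray hK.isBounded hx z)

theorem neg_rayEnd_neg_mem (hK : IsCompact K) {z x : E} (hx : x ≠ 0) {s : ℝ}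
    (hs : z + s • x ∈ K) : z + (-rayEnd K z (-x)) • x ∈ K := by
  simpa using rayEnd_mem hK (neg_ne_zero.mpr hx) (s := -s) (by simpa using hs)

theorem lt_rayEnd (hK : Bornology.IsBounded K) {z x : E} (hx : x ≠ 0) {s : ℝ}
    (hs : z + s • x ∈ interior K) : s < rayEnd K z x := by
  have hnear : ∀ᶠ r in 𝓝 s, z + r • x ∈ interior K :=
    (show ContinuousAt (fun s : ℝ => z + s • x) s by fun_prop).eventually
      (isOpen_interior.mem_nhds hs)
  obtain ⟨r, hr, hsr⟩ := (hnear.filter_mono nhdsWithin_le_nhds |>.and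
    (self_mem_nhdsWithin : Ioi s ∈ 𝓝[>] s)).exists
  exact lt_of_lt_of_le hsr (le_rayEnd hK hx (interior_subset hr))

theorem neg_rayEnd_neg_lt (hK : Bornology.IsBounded K) {z x : E} (hx : x ≠ 0) {s : ℝ}
    (hs : z + s • x ∈ interior K) : -rayEnd K z (-x) < s :=
  neg_lt.mp (lt_rayEnd hK (neg_ne_zero.mpr hx) (by simpa using hs))

theorem rayEnd_mem_frontier (hK : IsCompact K) {z x : E} (hx : x ≠ 0)
    (h : (z, x) ∈ crossing K) : z + rayEnd K z x • x ∈ frontier K := by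
  obtain ⟨s, hs⟩ := h
  rw [hK.isClosed.frontier_eq]
  exact ⟨rayEnd_mem hK hx (interior_subset hs), fun h => (lt_rayEnd hK.isBounded hx h).ne rfl⟩

theorem mem_interior_of_lt_of_le (hK : Convex ℝ K) {z x : E} {s₀ s b : ℝ}
    (h₀ : z + s₀ • x ∈ interior K) (hb : z + b • x ∈ K) (hs₀ : s₀ ≤ s) (hs : s < b) :
    z + s • x ∈ interior K := by
  have hne : b - s₀ ≠ 0 := by linarith
  have hpoint : z + s • x = (z + b • x) +
      ((b - s) / (b - s₀)) • ((z + s₀ • x) - (z + b • x)) := by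
    match_scalars <;> field_simp <;> ring
  rw [hpoint]
  exact hK.add_smul_sub_mem_interior' (subset_closure hb) h₀
    ⟨div_pos (by linarith) (by linarith), (div_le_one (by linarith)).mpr (by linarith)⟩

theorem mem_interior_of_mem_Ioo (hK : Convex ℝ K) (hKc : IsCompact K) {z x : E} (hx : x ≠ 0)
    (h : (z, x) ∈ crossing K) {s : ℝ} (hs : s ∈ Ioo (-rayEnd K z (-x)) (rayEnd K z x)) :
    z + s • x ∈ interior K := by
  obtain ⟨s₀, hs₀⟩ := h
  rcases le_total s₀ s with hle | hle
  · exact mem_interior_of_lt_of_le hK hs₀ (rayEnd_mem hKc hx (interior_subset hs₀)) hle hs.2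
  · have hs₀' : z + (-s₀) • (-x) ∈ interior K := by simpa using hs₀
    simpa using mem_interior_of_lt_of_le hK (s := -s) hs₀'
      (rayEnd_mem hKc (neg_ne_zero.mpr hx) (interior_subset hs₀')) (neg_le_neg hle)
      (neg_lt.mp hs.1)

theorem eq_rayEnd_of_mem_frontier (hK : Convex ℝ K) (hKc : IsCompact K) {z x : E} (hx : x ≠ 0)
    {s₀ s : ℝ} (h₀ : z + s₀ • x ∈ interior K) (hs : z + s • x ∈ frontier K) (h : s₀ < s) :
    s = rayEnd K z x := by
  have hsK : z + s • x ∈ K := hKc.isClosed.frontier_subset hs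
  refine (le_rayEnd hKc.isBounded hx hsK).eq_of_not_lt fun hlt => hs.2 ?_
  exact mem_interior_of_lt_of_le hK h₀ (rayEnd_mem hKc hx hsK) h.le hlt

/-- The point at parameter `w.2` on the line through `w.1.1` in direction `w.1.2`. -/
def linePoint (w : (E × E) × ℝ) : E := w.1.1 + w.2 • w.1.2

theorem contDiff_linePoint {k : WithTop ℕ∞} : ContDiff ℝ k (linePoint : (E × E) × ℝ → E) := by
  unfold linePoint
  fun_prop

theorem contDiffAt_rayEnd [CompleteSpace E] (hK : Convex ℝ K) (hKc : IsCompact K)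
    (hC : HasC2PositiveCurvatureBoundary K) {u₀ : E × E} (hx : u₀.2 ≠ 0) (h : u₀ ∈ crossing K) :
    ContDiffAt ℝ 2 (fun u : E × E => rayEnd K u.1 u.2) u₀ := by
  set w₀ : (E × E) × ℝ := (u₀, rayEnd K u₀.1 u₀.2) with hw₀
  have hfrontier : linePoint w₀ ∈ frontier K := rayEnd_mem_frontier hKc hx h
  obtain ⟨s₀, hs₀⟩ := h
  have hlt : s₀ < rayEnd K u₀.1 u₀.2 := lt_rayEnd hKc.isBounded hx hs₀
  obtain ⟨g, hg, hgfr, hneg, -⟩ := hC.exists_local_definingFunction hK hfrontier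
  have hoffset : u₀.1 + s₀ • u₀.2 - linePoint w₀ = (s₀ - w₀.2) • u₀.2 := by
    simp only [linePoint, hw₀]
    module
  have htransverse : fderiv ℝ g (linePoint w₀) u₀.2 ≠ 0 := fun hzero => by
    simpa [hoffset, hzero] using hneg _ hs₀
  refine contDiffAt_of_forall_zero two_ne_zero (G := fun w => g (linePoint w))
    (hg.comp w₀ contDiff_linePoint.contDiffAt) (hgfr.self_of_nhds.mp hfrontier)
    (hasDerivAt_comp_line (hg.differentiableAt two_ne_zero)) htransverse ?_
  have hinterior : ∀ᶠ w in 𝓝 w₀, w.1.1 + s₀ • w.1.2 ∈ interior K :=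
    (show Continuous fun w : (E × E) × ℝ => w.1.1 + s₀ • w.1.2 by
      fun_prop).continuousAt.eventually (isOpen_interior.mem_nhds hs₀)
  have hbeyond : ∀ᶠ w in 𝓝 w₀, s₀ < w.2 := continuousAt_snd.eventually (lt_mem_nhds hlt)
  have hdir : ∀ᶠ w in 𝓝 w₀, w.1.2 ≠ 0 :=
    (show Continuous fun w : (E × E) × ℝ => w.1.2 by fun_prop).continuousAt.eventually_ne hx
  filter_upwards [(contDiff_linePoint (k := 0)).continuous.continuousAt.eventually hgfr,
    hinterior, hbeyond, hdir] with w hfr hint hlt hne hzero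
  exact eq_rayEnd_of_mem_frontier hK hKc hne hint (hfr.mpr hzero) hlt

theorem contDiffAt_chordLength [CompleteSpace E] (hK : Convex ℝ K) (hKc : IsCompact K)
    (hC : HasC2PositiveCurvatureBoundary K) {u₀ : E × E} (hx : u₀.2 ≠ 0) (h : u₀ ∈ crossing K) :
    ContDiffAt ℝ 2 (fun u : E × E => chordLength K u.1 u.2) u₀ := by
  have hneg : ContDiffAt ℝ 2 (fun u : E × E => rayEnd K u.1 u.2) (u₀.1, -u₀.2) :=
    contDiffAt_rayEnd hK hKc hC (neg_ne_zero.mpr hx) (crossing_neg h)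
  have hreflect : ContDiffAt ℝ 2 (fun u : E × E => (u.1, -u.2)) u₀ := by fun_prop
  exact (contDiffAt_rayEnd hK hKc hC hx h).add
    (hneg.comp (f := fun u : E × E => (u.1, -u.2)) u₀ hreflect)

theorem concaveOn_rayEnd (hK : Convex ℝ K) (hKc : IsCompact K) {x : E} (hx : x ≠ 0) :
    ConcaveOn ℝ {z | (z, x) ∈ crossing K} fun z => rayEnd K z x := by
  refine ⟨convex_crossing hK x, ?_⟩
  rintro z ⟨s, hs⟩ w ⟨r, hr⟩ a b ha hb hab
  refine le_rayEnd hKc.isBounded hx ?_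
  convert hK (rayEnd_mem hKc hx (interior_subset hs)) (rayEnd_mem hKc hx (interior_subset hr))
    ha hb hab using 1
  simp only [smul_eq_mul]
  module

theorem concaveOn_chordLength (hK : Convex ℝ K) (hKc : IsCompact K) {x : E} (hx : x ≠ 0) :
    ConcaveOn ℝ {z | (z, x) ∈ crossing K} fun z => chordLength K z x :=
  (concaveOn_rayEnd hK hKc hx).add
    ((concaveOn_rayEnd hK hKc (neg_ne_zero.mpr hx)).subset (fun _ => crossing_neg)
      (convex_crossing hK x))

theorem mem_overlap_iff (hK : Convex ℝ K) (hKc : IsCompact K) {z x : E} (hx : x ≠ 0) :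
    z ∈ overlap K x ↔ (z, x) ∈ crossing K ∧ 1 < chordLength K z x := by
  constructor
  · rintro ⟨s, hs, hs'⟩
    have hupper := lt_rayEnd hKc.isBounded hx hs
    have hlower := neg_rayEnd_neg_lt hKc.isBounded hx hs'
    exact ⟨⟨s, hs⟩, by simp only [chordLength]; linarith⟩
  · rintro ⟨h, hlt⟩
    simp only [chordLength] at hlt
    refine ⟨(rayEnd K z x + 1 - rayEnd K z (-x)) / 2, ?_, ?_⟩ <;>
      exact mem_interior_of_mem_Ioo hK hKc hx h ⟨by linarith, by linarith⟩

theorem crossing_of_mem_of_mem (hK : StrictConvex ℝ K) {z x : E} (hx : x ≠ 0) {s r : ℝ}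
    (hs : z + s • x ∈ K) (hr : z + r • x ∈ K) (hsr : s ≠ r) : (z, x) ∈ crossing K := by
  refine ⟨(s + r) / 2, ?_⟩
  have hne : z + s • x ≠ z + r • x := by simpa [hx] using hsr
  convert hK hs hr hne (one_half_pos (α := ℝ)) one_half_pos (add_halves 1) using 1
  module

theorem chord_eq_Icc (hK : Convex ℝ K) (hKc : IsCompact K) {z x : E} (hx : x ≠ 0)
    (h : (z, x) ∈ crossing K) :
    {s : ℝ | z + s • x ∈ K} = Icc (-rayEnd K z (-x)) (rayEnd K z x) := by
  obtain ⟨s₀, hs₀⟩ := h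
  have hline : {s : ℝ | z + s • x ∈ K} = AffineMap.lineMap (k := ℝ) z (z + x) ⁻¹' K := by
    ext s
    simp [AffineMap.lineMap_apply, add_comm]
  have hconn : OrdConnected {s : ℝ | z + s • x ∈ K} := by
    rw [hline]
    exact (hK.affine_preimage _).ordConnected
  refine Subset.antisymm (fun s hs => ⟨neg_rayEnd_neg_le hKc.isBounded hx hs,
    le_rayEnd hKc.isBounded hx hs⟩) ?_
  exact hconn.out (neg_rayEnd_neg_mem hKc hx (interior_subset hs₀))
    (rayEnd_mem hKc hx (interior_subset hs₀))

theorem volume_chord_translateInter (hK : Convex ℝ K) (hKc : IsCompact K) {z x : E}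
    (hx : x ≠ 0) (h : (z, x) ∈ crossing K) :
    volume {s : ℝ | z + s • x ∈ translateInter K x} = ENNReal.ofReal (chordLength K z x - 1) := by
  have hset : {s : ℝ | z + s • x ∈ translateInter K x} =
      Icc (-rayEnd K z (-x)) (rayEnd K z x) ∩
        (fun s => s - 1) ⁻¹' Icc (-rayEnd K z (-x)) (rayEnd K z x) := by
    rw [← chord_eq_Icc hK hKc hx h]
    exact ext fun s => add_smul_mem_translateInter_iff
  rw [hset, preimage_sub_const_Icc, Icc_inter_Icc, Real.volume_Icc, max_eq_right (by linarith),
    min_eq_left (by linarith), chordLength]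
  ring_nf

theorem volume_chord_translateInter_eq_zero (hK : StrictConvex ℝ K) (hKc : IsCompact K)
    {z x : E} (hx : x ≠ 0) (h : z ∉ overlap K x) :
    volume {s : ℝ | z + s • x ∈ translateInter K x} = 0 := by
  by_cases hcross : (z, x) ∈ crossing K
  · rw [volume_chord_translateInter hK.convex hKc hx hcross]
    refine ENNReal.ofReal_of_nonpos (sub_nonpos.mpr (not_lt.mp fun hlt => h ?_))
    exact (mem_overlap_iff hK.convex hKc hx).mpr ⟨hcross, hlt⟩
  · have hempty : {s : ℝ | z + s • x ∈ translateInter K x} = ∅ :=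
      eq_empty_of_forall_notMem fun s hs => hcross <|
        have hmem := add_smul_mem_translateInter_iff.mp hs
        crossing_of_mem_of_mem hK hx hmem.1 hmem.2 (sub_one_lt s).ne'
    rw [hempty, measure_empty]

end Chord

section Radial

variable {E : Type*} [NormedAddCommGroup E] [NormedSpace ℝ E] {K : Set E}

theorem convex_overlap (hK : Convex ℝ K) (x : E) : Convex ℝ (overlap K x) := by
  rintro z ⟨s, hs, hs'⟩ w ⟨r, hr, hr'⟩ a b ha hb hab
  refine ⟨a * s + b * r, ?_, ?_⟩
  · convert hK.interior hs hr ha hb hab using 1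
    module
  · convert hK.interior hs' hr' ha hb hab using 1
    obtain rfl : a = 1 - b := by linarith
    module

theorem eventually_mem_overlap {y x₀ : E} (hy : y ∈ overlap K x₀) :
    ∀ᶠ x in 𝓝 x₀, y ∈ overlap K x := by
  obtain ⟨s, hs, hs'⟩ := hy
  have hnear : ∀ r : ℝ, y + r • x₀ ∈ interior K → ∀ᶠ x in 𝓝 x₀, y + r • x ∈ interior K :=
    fun r hr => (show ContinuousAt (fun x : E => y + r • x) x₀ by fun_prop).eventually
      (isOpen_interior.mem_nhds hr)
  filter_upwards [hnear s hs, hnear (s - 1) hs'] with x h h' using ⟨s, h, h'⟩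

theorem exists_mem_translateInter_of_mem_closure_overlap (hKc : IsCompact K) {z x : E}
    (hz : z ∈ closure (overlap K x)) : ∃ s : ℝ, z + s • x ∈ translateInter K x := by
  have hclosed : IsClosed (((ℝ ∙ x : Submodule ℝ E) : Set E) + translateInter K x) :=
    (Submodule.closed_of_finiteDimensional _).add_right_of_isCompact
      (isCompact_translateInter hKc x)
  have hsub : overlap K x ⊆ ((ℝ ∙ x : Submodule ℝ E) : Set E) + translateInter K x := by
    rintro w ⟨s, hs, hs'⟩
    refine mem_add.mpr ⟨(-s) • x, Submodule.smul_mem _ _ (Submodule.mem_span_singleton_self x),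
      w + s • x, add_smul_mem_translateInter_iff.mpr ⟨interior_subset hs, interior_subset hs'⟩, ?_⟩
    module
  obtain ⟨p, hp, w, hw, rfl⟩ := mem_add.mp (closure_minimal hsub hclosed hz)
  obtain ⟨r, rfl⟩ := Submodule.mem_span_singleton.mp hp
  exact ⟨-r, by simpa using hw⟩

theorem one_le_chordLength (hKc : IsCompact K) {z x : E} (hx : x ≠ 0) {s : ℝ}
    (hs : z + s • x ∈ translateInter K x) : 1 ≤ chordLength K z x := by
  obtain ⟨hs, hs'⟩ := add_smul_mem_translateInter_iff.mp hs
  have hupper := le_rayEnd hKc.isBounded hx hs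
  have hlower := neg_rayEnd_neg_le hKc.isBounded hx hs'
  rw [chordLength]
  linarith

theorem mem_frontier_overlap_iff (hK : StrictConvex ℝ K) (hKc : IsCompact K) {x z : E}
    (hx : x ≠ 0) (hne : (overlap K x).Nonempty) :
    z ∈ frontier (overlap K x) ↔ (z, x) ∈ crossing K ∧ chordLength K z x = 1 := by
  have hoverlap : ∀ {w}, w ∈ overlap K x ↔ (w, x) ∈ crossing K ∧ 1 < chordLength K w x :=
    mem_overlap_iff hK.convex hKc hx
  rw [(isOpen_overlap x).frontier_eq]
  constructor
  · rintro ⟨hz, hznot⟩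
    obtain ⟨s, hs⟩ := exists_mem_translateInter_of_mem_closure_overlap hKc hz
    obtain ⟨hsK, hsK'⟩ := add_smul_mem_translateInter_iff.mp hs
    have hcross := crossing_of_mem_of_mem hK hx hsK hsK' (sub_one_lt s).ne'
    exact ⟨hcross, (one_le_chordLength hKc hx hs).eq_of_not_lt'
      fun hlt => hznot (hoverlap.mpr ⟨hcross, hlt⟩)⟩
  · rintro ⟨hcross, hone⟩
    obtain ⟨y, hy⟩ := hne
    obtain ⟨hycross, hylt⟩ := hoverlap.mp hy
    have hseg : openSegment ℝ y z ⊆ overlap K x := by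
      rintro - ⟨a, b, ha, hb, hab, rfl⟩
      have hconc := (concaveOn_chordLength hK.convex hKc hx).2 hycross hcross ha.le hb.le hab
      refine hoverlap.mpr ⟨convex_crossing hK.convex x hycross hcross ha.le hb.le hab,
        lt_of_lt_of_le ?_ hconc⟩
      simp only [smul_eq_mul, hone]
      nlinarith
    exact ⟨closure_mono hseg (segment_subset_closure_openSegment (right_mem_segment ℝ y z)),
      fun hz => (hoverlap.mp hz).2.ne' hone⟩

/-- The radial function, in direction `ξ`, of `overlap K x` with respect to the point `y`. -/
noncomputable def overlapRadius (K : Set E) (y ξ x : E) : ℝ :=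
  (gauge ((y + ·) ⁻¹' overlap K x) ξ)⁻¹

theorem preimage_overlap_mem_nhds_zero {y x : E} (hy : y ∈ overlap K x) :
    (y + ·) ⁻¹' overlap K x ∈ 𝓝 (0 : E) :=
  (show ContinuousAt (y + ·) (0 : E) by fun_prop).preimage_mem_nhds
    ((isOpen_overlap x).mem_nhds (by simpa using hy))

theorem gauge_overlap_lt_one_iff (hK : Convex ℝ K) {y x w : E} (hy : y ∈ overlap K x) :
    gauge ((y + ·) ⁻¹' overlap K x) w < 1 ↔ y + w ∈ overlap K x := by
  rw [gauge_lt_one_iff_mem_interior ((convex_overlap hK x).translate_preimage_right y)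
    (preimage_overlap_mem_nhds_zero hy), ((isOpen_overlap x).preimage (by fun_prop)).interior_eq,
    mem_preimage]

theorem gauge_overlap_eq_one_iff (hK : Convex ℝ K) {y x w : E} (hy : y ∈ overlap K x) :
    gauge ((y + ·) ⁻¹' overlap K x) w = 1 ↔ y + w ∈ frontier (overlap K x) := by
  rw [gauge_eq_one_iff_mem_frontier ((convex_overlap hK x).translate_preimage_right y)
    (preimage_overlap_mem_nhds_zero hy), ← mem_preimage (f := (y + ·)),
    ← Homeomorph.coe_addLeft, (Homeomorph.addLeft y).preimage_frontier]

theorem gauge_overlap_pos (hK : Convex ℝ K) (hKc : IsCompact K) {y x ξ : E}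
    (hy : y ∈ overlap K x) (hξ : ξ ∉ ℝ ∙ x) : 0 < gauge ((y + ·) ⁻¹' overlap K x) ξ := by
  refine (gauge_nonneg _).lt_of_ne' fun hzero => ?_
  have hray : ∀ r : ℝ, 0 ≤ r → y + r • ξ ∈ overlap K x := fun r hr => by
    rw [← gauge_overlap_lt_one_iff hK hy, gauge_smul_of_nonneg hr, hzero, smul_zero]
    exact one_pos
  -- Modulo the direction `x`, the overlap is contained in the compact image of `K`.
  have hclosed : IsClosed ((ℝ ∙ x : Submodule ℝ E) : Set E) :=
    Submodule.closed_of_finiteDimensional _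
  have hbounded : Bornology.IsBounded ((ℝ ∙ x).mkQ '' K) :=
    (hKc.image (ℝ ∙ x).mkQL.continuous).isBounded
  obtain ⟨b, hb⟩ := bddAbove_ray hbounded (x := (ℝ ∙ x).mkQ ξ)
    (by simpa [Submodule.Quotient.mk_eq_zero] using hξ) ((ℝ ∙ x).mkQ y)
  obtain ⟨s, hs, -⟩ := hray (|b| + 1) (by positivity)
  have himage : (ℝ ∙ x).mkQ (y + (|b| + 1) • ξ + s • x) ∈ (ℝ ∙ x).mkQ '' K :=
    mem_image_of_mem _ (interior_subset hs)
  have hxzero : (ℝ ∙ x).mkQ x = 0 := by simp [Submodule.mem_span_singleton_self]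
  rw [map_add, map_smul, hxzero, smul_zero, add_zero, map_add, map_smul] at himage
  linarith [hb himage, le_abs_self b]

theorem overlapRadius_pos (hK : Convex ℝ K) (hKc : IsCompact K) {y x ξ : E}
    (hy : y ∈ overlap K x) (hξ : ξ ∉ ℝ ∙ x) : 0 < overlapRadius K y ξ x :=
  inv_pos.mpr (gauge_overlap_pos hK hKc hy hξ)

theorem add_smul_mem_overlap_iff (hK : Convex ℝ K) (hKc : IsCompact K) {y x ξ : E}
    (hy : y ∈ overlap K x) (hξ : ξ ∉ ℝ ∙ x) {r : ℝ} (hr : 0 ≤ r) :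
    y + r • ξ ∈ overlap K x ↔ r < overlapRadius K y ξ x := by
  rw [← gauge_overlap_lt_one_iff hK hy, gauge_smul_of_nonneg hr, smul_eq_mul, overlapRadius,
    ← one_div, lt_div_iff₀ (gauge_overlap_pos hK hKc hy hξ)]

theorem chordLength_overlapRadius (hK : StrictConvex ℝ K) (hKc : IsCompact K) {y x ξ : E}
    (hx : x ≠ 0) (hy : y ∈ overlap K x) (hξ : ξ ∉ ℝ ∙ x) :
    (y + overlapRadius K y ξ x • ξ, x) ∈ crossing K ∧
      chordLength K (y + overlapRadius K y ξ x • ξ) x = 1 := by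
  rw [← mem_frontier_overlap_iff hK hKc hx ⟨y, hy⟩, ← gauge_overlap_eq_one_iff hK.convex hy,
    gauge_smul_of_nonneg (overlapRadius_pos hK.convex hKc hy hξ).le, smul_eq_mul, overlapRadius,
    inv_mul_cancel₀ (gauge_overlap_pos hK.convex hKc hy hξ).ne']

theorem eq_overlapRadius (hK : StrictConvex ℝ K) (hKc : IsCompact K) {y x ξ : E} (hx : x ≠ 0)
    (hy : y ∈ overlap K x) {r : ℝ} (hr : 0 < r) (hcross : (y + r • ξ, x) ∈ crossing K)
    (hone : chordLength K (y + r • ξ) x = 1) : r = overlapRadius K y ξ x := by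
  have hgauge := (gauge_overlap_eq_one_iff hK.convex hy).mpr
    ((mem_frontier_overlap_iff hK hKc hx ⟨y, hy⟩).mpr ⟨hcross, hone⟩)
  rw [gauge_smul_of_nonneg hr.le, smul_eq_mul] at hgauge
  exact eq_inv_of_mul_eq_one_left hgauge

theorem chordLength_deriv_neg (hK : Convex ℝ K) (hKc : IsCompact K) {y x ξ : E} {r d : ℝ}
    (hx : x ≠ 0) (hy : y ∈ overlap K x) (hr : 0 < r) (hcross : (y + r • ξ, x) ∈ crossing K)
    (hone : chordLength K (y + r • ξ) x = 1)
    (hd : HasDerivAt (fun t : ℝ => chordLength K (y + t • ξ) x) d r) : d < 0 := by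
  obtain ⟨hycross, hylt⟩ := (mem_overlap_iff hK hKc hx).mp hy
  have hconc : ConcaveOn ℝ {t : ℝ | (y + t • ξ, x) ∈ crossing K}
      fun t => chordLength K (y + t • ξ) x := by
    convert (concaveOn_chordLength hK hKc hx).comp_affineMap
      (AffineMap.lineMap (k := ℝ) y (y + ξ)) using 1 <;> ext <;>
      simp [AffineMap.lineMap_apply, add_comm]
  have hslope := hconc.le_slope_of_hasDerivAt (x := 0) (by simpa using hycross) hcross hr hd
  rw [slope_def_field, hone, zero_smul, add_zero, sub_zero] at hslope
  exact hslope.trans_lt (div_neg_of_neg_of_pos (by linarith) hr)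

theorem contDiffAt_overlapRadius [CompleteSpace E] (hK : Convex ℝ K) (hKc : IsCompact K)
    (hC : HasC2PositiveCurvatureBoundary K) {y x ξ : E} (hx : x ≠ 0) (hy : y ∈ overlap K x)
    (hξ : ξ ∉ ℝ ∙ x) :
    ContDiffAt ℝ 2 (fun u : E × E => overlapRadius K y u.1 u.2) (ξ, x) := by
  have hKs := hC.strictConvex hK hKc.isClosed
  set R := overlapRadius K y ξ x
  have hRpos : 0 < R := overlapRadius_pos hK hKc hy hξ
  obtain ⟨hcross, hone⟩ := chordLength_overlapRadius hKs hKc hx hy hξ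
  have hpoint : ContDiff ℝ 2 fun w : (E × E) × ℝ => (y + w.2 • w.1.1, w.1.2) := by fun_prop
  have hG : ContDiffAt ℝ 2 (fun w : (E × E) × ℝ => chordLength K (y + w.2 • w.1.1) w.1.2 - 1)
      ((ξ, x), R) :=
    (ContDiffAt.comp (g := fun u : E × E => chordLength K u.1 u.2) ((ξ, x), R)
      (contDiffAt_chordLength hK hKc hC hx hcross) hpoint.contDiffAt).sub contDiffAt_const
  have hline : HasDerivAt (fun t : ℝ => chordLength K (y + t • ξ) x - 1)
      (deriv (fun t : ℝ => chordLength K (y + t • ξ) x - 1) R) R :=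
    ((hG.differentiableAt two_ne_zero).comp R
      (by fun_prop : DifferentiableAt ℝ (fun t : ℝ => ((ξ, x), t)) R)).hasDerivAt
  refine contDiffAt_of_forall_zero two_ne_zero hG (sub_eq_zero.mpr hone) hline
    (chordLength_deriv_neg hK hKc hx hy hRpos hcross hone
      (by simpa using hline.add_const 1)).ne ?_
  have hdir : ContinuousAt (fun w : (E × E) × ℝ => w.1.2) ((ξ, x), R) := by fun_prop
  filter_upwards [hpoint.continuous.continuousAt.eventually (isOpen_crossing.mem_nhds hcross),
    continuousAt_snd.eventually (lt_mem_nhds hRpos), hdir.eventually_ne hx,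
    hdir.eventually (eventually_mem_overlap hy)] with w hwcross hwpos hwne hwy hwzero
  exact eq_overlapRadius hKs hKc hwne hwy hwpos hwcross (sub_eq_zero.mp hwzero)

end Radial

theorem lintegral_eq_abs_mul_lintegral_comp_mul {c : ℝ} (hc : c ≠ 0) (ψ : ℝ → ℝ≥0∞) :
    ∫⁻ s, ψ s = ENNReal.ofReal |c| * ∫⁻ s, ψ (c * s) := by
  have hmap := lintegral_map_equiv (μ := volume) ψ (Homeomorph.mulLeft₀ c hc).toMeasurableEquiv
  conv_lhs => rw [← Real.smul_map_volume_mul_left hc]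
  rw [lintegral_smul_measure]
  exact congrArg _ hmap

theorem setLIntegral_Ioi_eq_mul_setLIntegral_Icc {R : ℝ} (hR : 0 < R) {ψ : ℝ → ℝ≥0∞}
    (hψ : ∀ r, R < r → ψ r = 0) :
    ∫⁻ r in Ioi (0 : ℝ), ψ r = ENNReal.ofReal R * ∫⁻ ρ in Icc (0 : ℝ) 1, ψ (R * ρ) := by
  have htruncate : (Ioi (0 : ℝ)).indicator ψ = (Ioc 0 R).indicator ψ := by
    ext r
    by_cases hr : R < r
    · simp [indicator, hψ r hr]
    · simp [indicator, not_lt.mp hr]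
  have hrescale : ∀ ρ, (Ioc 0 R).indicator ψ (R * ρ) =
      (Ioc (0 : ℝ) 1).indicator (fun ρ => ψ (R * ρ)) ρ := fun ρ => by
    simp only [indicator, mem_Ioc, mul_pos_iff_of_pos_left hR, mul_le_iff_le_one_right hR]
  rw [← lintegral_indicator measurableSet_Ioi, htruncate,
    lintegral_eq_abs_mul_lintegral_comp_mul hR.ne', abs_of_pos hR]
  simp only [hrescale]
  rw [lintegral_indicator measurableSet_Ioc, Measure.restrict_congr_set Ioc_ae_eq_Icc]

section Slice

variable {E : Type*} [NormedAddCommGroup E] [NormedSpace ℝ E]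
  [MeasurableSpace E] [BorelSpace E] {f : E →L[ℝ] ℝ} {x₀ x : E}

theorem lintegral_measure_slice_eq (hf : f x₀ = 1) (hx : f x ≠ 0) (ν : Measure f.ker)
    [ν.IsAddLeftInvariant] (A : Set E) :
    ∫⁻ s : ℝ, ν {w | (w : E) + s • x₀ ∈ A} =
      ENNReal.ofReal |f x| * ∫⁻ s : ℝ, ν {w | (w : E) + s • x ∈ A} := by
  rw [lintegral_eq_abs_mul_lintegral_comp_mul hx]
  refine congrArg _ (lintegral_congr fun s => ?_)
  have hshift : s • (x - f x • x₀) ∈ f.ker := by simp [hf]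
  rw [← measure_preimage_add ν ⟨_, hshift⟩]
  congr 1
  ext w
  simp only [mem_preimage, mem_ofPred_eq, Submodule.coe_add]
  rw [show s • (x - f x • x₀) + (w : E) + (f x * s) • x₀ = (w : E) + s • x by module]

variable [FiniteDimensional ℝ E]

theorem exists_measure_eq_lintegral_measure_slice (μ : Measure E) [μ.IsAddHaarMeasure]
    (hf : f x₀ = 1) (ν : Measure f.ker) [ν.IsAddHaarMeasure] :
    ∃ c : NNReal, ∀ A : Set E, MeasurableSet A →
      μ A = c * ∫⁻ s : ℝ, ν {w | (w : E) + s • x₀ ∈ A} := by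
  have hinv : Function.RightInverse (ContinuousLinearMap.toSpanSingleton ℝ x₀) f := by
    intro s
    simp [hf]
  set e := (ContinuousLinearEquiv.equivOfRightInverse f _ hinv).symm with he
  have : ((volume.prod ν).map e).IsAddHaarMeasure := e.isAddHaarMeasure_map _
  refine ⟨μ.addHaarScalarFactor ((volume.prod ν).map e), fun A hA => ?_⟩
  conv_lhs => rw [Measure.isAddLeftInvariant_eq_smul μ ((volume.prod ν).map e)]
  rw [Measure.smul_apply, Measure.map_apply e.continuous.measurable hA,
    Measure.prod_apply (e.continuous.measurable hA), ENNReal.smul_def, smul_eq_mul]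
  congr! 4
  ext w
  simp [he, add_comm]

theorem exists_measure_eq_lintegral_volume_line (μ : Measure E) [μ.IsAddHaarMeasure]
    (hf : f x₀ = 1) (ν : Measure f.ker) [ν.IsAddHaarMeasure] :
    ∃ c : NNReal, ∀ x, f x ≠ 0 → ∀ A : Set E, MeasurableSet A →
      μ A = c * ENNReal.ofReal |f x| * ∫⁻ w : f.ker, volume {s : ℝ | (w : E) + s • x ∈ A} ∂ν := by
  obtain ⟨c, hc⟩ := exists_measure_eq_lintegral_measure_slice μ hf ν
  refine ⟨c, fun x hx A hA => ?_⟩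
  have hmeas : MeasurableSet {p : ℝ × f.ker | (p.2 : E) + p.1 • x ∈ A} :=
    (show Continuous fun p : ℝ × f.ker => (p.2 : E) + p.1 • x by fun_prop).measurable hA
  rw [hc A hA, lintegral_measure_slice_eq hf hx, mul_assoc]
  congr 2
  exact (Measure.prod_apply hmeas).symm.trans (Measure.prod_apply_symm hmeas)

end Slice

section Polar

variable {F : Type*} [NormedAddCommGroup F] [NormedSpace ℝ F] [FiniteDimensional ℝ F]
  [MeasurableSpace F] [BorelSpace F]

theorem lintegral_eq_lintegral_toSphere [Nontrivial F] (ν : Measure F) [ν.IsAddHaarMeasure]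
    {φ : F → ℝ≥0∞} (hφ : Measurable φ) :
    ∫⁻ w, φ w ∂ν = ∫⁻ ξ : Metric.sphere (0 : F) 1, ∫⁻ r in Ioi (0 : ℝ),
      ENNReal.ofReal (r ^ (Module.finrank ℝ F - 1)) * φ (r • (ξ : F)) ∂volume ∂ν.toSphere := by
  have hφs : Measurable fun p : Metric.sphere (0 : F) 1 × Ioi (0 : ℝ) =>
      φ ((p.2 : ℝ) • (p.1 : F)) := hφ.comp (by fun_prop)
  calc ∫⁻ w, φ w ∂ν = ∫⁻ w in ({0}ᶜ : Set F), φ w ∂ν := by rw [restrict_compl_singleton]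
    _ = ∫⁻ w : (({0}ᶜ : Set F) : Type _), φ w ∂(ν.comap (↑)) :=
      (lintegral_subtype_comap (measurableSet_singleton _).compl φ).symm
    _ = ∫⁻ w : (({0}ᶜ : Set F) : Type _), φ (((homeomorphUnitSphereProd F w).2 : ℝ) •
          ((homeomorphUnitSphereProd F w).1 : F)) ∂(ν.comap (↑)) := by
      refine lintegral_congr fun w => congrArg φ ?_
      rw [← homeomorphUnitSphereProd_symm_apply_coe, Homeomorph.symm_apply_apply]
    _ = ∫⁻ p : Metric.sphere (0 : F) 1 × Ioi (0 : ℝ), φ ((p.2 : ℝ) • (p.1 : F))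
          ∂(ν.toSphere.prod (Measure.volumeIoiPow (Module.finrank ℝ F - 1))) :=
      ν.measurePreserving_homeomorphUnitSphereProd.lintegral_comp hφs
    _ = _ := by
      rw [lintegral_prod _ hφs.aemeasurable]
      refine lintegral_congr fun ξ => ?_
      have hφξ : Measurable fun r : Ioi (0 : ℝ) => φ ((r : ℝ) • (ξ : F)) :=
        hφ.comp (by fun_prop)
      rw [Measure.volumeIoiPow, lintegral_withDensity_eq_lintegral_mul _ (by fun_prop) hφξ]
      exact lintegral_subtype_comap measurableSet_Ioi
        (fun r : ℝ => ENNReal.ofReal (r ^ (Module.finrank ℝ F - 1)) * φ (r • (ξ : F)))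

theorem lintegral_sphere_prod_eq_ofReal_setIntegral (σ : Measure (Metric.sphere (0 : F) 1))
    [IsFiniteMeasure σ] {G : F × ℝ → ℝ}
    (hG : ContinuousOn G (Metric.sphere (0 : F) 1 ×ˢ Icc (0 : ℝ) 1))
    (hG_nonneg : ∀ q ∈ Metric.sphere (0 : F) 1 ×ˢ Icc (0 : ℝ) 1, 0 ≤ G q) :
    ∫⁻ ξ, ∫⁻ ρ in Icc (0 : ℝ) 1, ENNReal.ofReal (G (ξ, ρ)) ∂volume ∂σ =
      ENNReal.ofReal (∫ q in Metric.sphere (0 : F) 1 ×ˢ Icc (0 : ℝ) 1, G q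
        ∂(σ.map Subtype.val).prod volume) := by
  have : ProperSpace F := FiniteDimensional.proper ℝ F
  have hcompact : IsCompact (Metric.sphere (0 : F) 1 ×ˢ Icc (0 : ℝ) 1) :=
    (isCompact_sphere _ _).prod isCompact_Icc
  have hsphere : MeasurableSet (Metric.sphere (0 : F) 1) := Metric.isClosed_sphere.measurableSet
  have hcoe := MeasurableEmbedding.subtype_coe hsphere
  have hmeas : AEMeasurable (fun q => ENNReal.ofReal (G q)) (((σ.map Subtype.val).prod
      volume).restrict (Metric.sphere (0 : F) 1 ×ˢ Icc (0 : ℝ) 1)) :=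
    (hG.aemeasurable hcompact.measurableSet).ennreal_ofReal
  rw [ofReal_integral_eq_lintegral_ofReal (hG.integrableOn_compact hcompact)
    (ae_restrict_of_forall_mem hcompact.measurableSet hG_nonneg)]
  rw [← Measure.prod_restrict] at hmeas ⊢
  rw [lintegral_prod _ hmeas, Measure.restrict_map hcoe.measurable hsphere,
    Subtype.coe_preimage_self, Measure.restrict_univ, hcoe.lintegral_map]

end Polar

section Covariogram

variable {E : Type*} [NormedAddCommGroup E] [NormedSpace ℝ E] {K : Set E}

/-- The covariogram `x ↦ μ (K ∩ (x + K))` of a set `K`. -/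
noncomputable def covariogram [MeasurableSpace E] (μ : Measure E) (K : Set E) (x : E) : ℝ :=
  μ.real (translateInter K x)

/-- The length of the chord of `K ∩ (x + K)` in direction `x` through a point of the cylinder
`overlap K x`, times the `k`-th power Jacobian of polar coordinates about `y`. The argument is
`(x, ξ, ρ)`: a direction `ξ` and a fraction `ρ` of the radius of the cylinder in that direction. -/
noncomputable def polarDensity (K : Set E) (k : ℕ) (y : E) (u : E × E × ℝ) : ℝ :=
  overlapRadius K y u.2.1 u.1 * (overlapRadius K y u.2.1 u.1 * u.2.2) ^ k *
    (chordLength K (y + (overlapRadius K y u.2.1 u.1 * u.2.2) • u.2.1) u.1 - 1)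

theorem add_overlapRadius_smul_mem_crossing (hK : StrictConvex ℝ K) (hKc : IsCompact K)
    {y x ξ : E} (hx : x ≠ 0) (hy : y ∈ overlap K x) (hξ : ξ ∉ ℝ ∙ x) {ρ : ℝ}
    (hρ : ρ ∈ Icc (0 : ℝ) 1) :
    (y + (overlapRadius K y ξ x * ρ) • ξ, x) ∈ crossing K ∧
      1 ≤ chordLength K (y + (overlapRadius K y ξ x * ρ) • ξ) x := by
  rcases hρ.2.eq_or_lt with rfl | hlt
  · rw [mul_one]
    exact (chordLength_overlapRadius hK hKc hx hy hξ).imp_right Eq.ge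
  · have hR := overlapRadius_pos hK.convex hKc hy hξ
    have hmem := (add_smul_mem_overlap_iff hK.convex hKc hy hξ (mul_nonneg hR.le hρ.1)).mpr
      (mul_lt_of_lt_one_right hR hlt)
    exact ((mem_overlap_iff hK.convex hKc hx).mp hmem).imp_right le_of_lt

theorem polarDensity_nonneg (hK : StrictConvex ℝ K) (hKc : IsCompact K) {y x ξ : E}
    (hx : x ≠ 0) (hy : y ∈ overlap K x) (hξ : ξ ∉ ℝ ∙ x) {ρ : ℝ} (hρ : ρ ∈ Icc (0 : ℝ) 1)
    (k : ℕ) : 0 ≤ polarDensity K k y (x, ξ, ρ) := by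
  have hR := overlapRadius_pos hK.convex hKc hy hξ
  have hchord := (add_overlapRadius_smul_mem_crossing hK hKc hx hy hξ hρ).2
  have hρ_nonneg := hρ.1
  exact mul_nonneg (by positivity) (sub_nonneg.mpr hchord)

theorem contDiffAt_polarDensity [CompleteSpace E] (hK : Convex ℝ K) (hKc : IsCompact K)
    (hC : HasC2PositiveCurvatureBoundary K) {y x ξ : E} (hx : x ≠ 0) (hy : y ∈ overlap K x)
    (hξ : ξ ∉ ℝ ∙ x) {ρ : ℝ} (hρ : ρ ∈ Icc (0 : ℝ) 1) (k : ℕ) :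
    ContDiffAt ℝ 2 (polarDensity K k y) (x, ξ, ρ) := by
  have hR : ContDiffAt ℝ 2 (fun u : E × E × ℝ => overlapRadius K y u.2.1 u.1) (x, ξ, ρ) :=
    ContDiffAt.comp (g := fun u : E × E => overlapRadius K y u.1 u.2)
      (f := fun u : E × E × ℝ => (u.2.1, u.1)) (x, ξ, ρ)
      (contDiffAt_overlapRadius hK hKc hC hx hy hξ) (by fun_prop)
  have hcross := (add_overlapRadius_smul_mem_crossing (hC.strictConvex hK hKc.isClosed)
    hKc hx hy hξ hρ).1
  have hchord : ContDiffAt ℝ 2 (fun u : E × E × ℝ =>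
      chordLength K (y + (overlapRadius K y u.2.1 u.1 * u.2.2) • u.2.1) u.1) (x, ξ, ρ) :=
    ContDiffAt.comp (g := fun u : E × E => chordLength K u.1 u.2)
      (f := fun u : E × E × ℝ => (y + (overlapRadius K y u.2.1 u.1 * u.2.2) • u.2.1, u.1))
      (x, ξ, ρ) (contDiffAt_chordLength hK hKc hC hx hcross) (by fun_prop)
  exact (hR.mul ((hR.mul (by fun_prop)).pow k)).mul (hchord.sub contDiffAt_const)

theorem notMem_span_singleton_of_map_eq_zero {f : E →L[ℝ] ℝ} {x ξ : E} (hfx : f x ≠ 0)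
    (hfξ : f ξ = 0) (hξ : ξ ≠ 0) : ξ ∉ ℝ ∙ x := by
  rw [Submodule.mem_span_singleton]
  rintro ⟨a, rfl⟩
  simp_all

theorem ne_zero_and_notMem_span_singleton {f : E →L[ℝ] ℝ} {x : E} {ξ : f.ker} (hfx : f x ≠ 0)
    (hξ : ξ ∈ Metric.sphere (0 : f.ker) 1) : x ≠ 0 ∧ (ξ : E) ∉ ℝ ∙ x :=
  ⟨by rintro rfl; simp at hfx, notMem_span_singleton_of_map_eq_zero hfx ξ.2
    (by simpa using Metric.ne_of_mem_sphere hξ one_ne_zero)⟩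

theorem lintegral_ray_eq_lintegral_polarDensity (hK : StrictConvex ℝ K) (hKc : IsCompact K)
    {y x ξ : E} (hx : x ≠ 0) (hy : y ∈ overlap K x) (hξ : ξ ∉ ℝ ∙ x) (k : ℕ) :
    ∫⁻ r in Ioi (0 : ℝ), ENNReal.ofReal (r ^ k) *
        volume {s : ℝ | y + r • ξ + s • x ∈ translateInter K x} =
      ∫⁻ ρ in Icc (0 : ℝ) 1, ENNReal.ofReal (polarDensity K k y (x, ξ, ρ)) := by
  have hR := overlapRadius_pos hK.convex hKc hy hξ
  rw [setLIntegral_Ioi_eq_mul_setLIntegral_Icc hR fun r hr => ?beyond,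
    ← lintegral_const_mul' _ _ ENNReal.ofReal_ne_top]
  case beyond =>
    have hnot : y + r • ξ ∉ overlap K x := by
      rw [add_smul_mem_overlap_iff hK.convex hKc hy hξ (hR.le.trans hr.le)]
      exact hr.le.not_gt
    rw [volume_chord_translateInter_eq_zero hK hKc hx hnot, mul_zero]
  refine setLIntegral_congr_fun measurableSet_Icc fun ρ hρ => ?_
  have hcross := (add_overlapRadius_smul_mem_crossing hK hKc hx hy hξ hρ).1
  have hρ_nonneg := hρ.1
  rw [volume_chord_translateInter hK.convex hKc hx hcross, polarDensity,
    ENNReal.ofReal_mul (by positivity), ENNReal.ofReal_mul (by positivity), mul_assoc]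

variable [FiniteDimensional ℝ E]

theorem contDiffAt_polarDensity_ker (hK : Convex ℝ K) (hKc : IsCompact K)
    (hC : HasC2PositiveCurvatureBoundary K) {f : E →L[ℝ] ℝ} {y x : E} (hfx : f x ≠ 0)
    (hy : y ∈ overlap K x) (k : ℕ) {q : f.ker × ℝ}
    (hq : q ∈ Metric.sphere (0 : f.ker) 1 ×ˢ Icc (0 : ℝ) 1) :
    ContDiffAt ℝ 2 (fun u : E × f.ker × ℝ => polarDensity K k y (u.1, u.2.1, u.2.2)) (x, q) := by
  have : CompleteSpace E := FiniteDimensional.complete ℝ E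
  obtain ⟨hx, hξ⟩ := ne_zero_and_notMem_span_singleton hfx hq.1
  have hcoe : ContDiff ℝ 2 fun u : E × f.ker × ℝ => (u.1, (u.2.1 : E), u.2.2) :=
    contDiff_fst.prodMk ((f.ker.subtypeL.contDiff.comp (contDiff_fst.comp contDiff_snd)).prodMk
      (contDiff_snd.comp contDiff_snd))
  exact ContDiffAt.comp (g := polarDensity K k y) (x, q)
    (contDiffAt_polarDensity hK hKc hC hx hy hξ hq.2 k) hcoe.contDiffAt

variable [MeasurableSpace E]

theorem contDiffAt_lintegral_volume_chord_of_subsingleton (hK : Convex ℝ K) (hKc : IsCompact K)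
    (hC : HasC2PositiveCurvatureBoundary K) {f : E →L[ℝ] ℝ} [Subsingleton f.ker]
    (ν : Measure f.ker) {y : f.ker} {x₀ : E} (hx₀ : x₀ ≠ 0)
    (hy : (y : E) ∈ overlap K x₀) :
    ContDiffAt ℝ 2 (fun x => (∫⁻ w : f.ker,
      volume {s : ℝ | (w : E) + s • x ∈ translateInter K x} ∂ν).toReal) x₀ := by
  have : CompleteSpace E := FiniteDimensional.complete ℝ E
  let _ : Unique f.ker := ⟨⟨y⟩, fun z => Subsingleton.elim _ _⟩
  have hchord : ContDiffAt ℝ 2 (fun x => chordLength K (y : E) x) x₀ :=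
    ContDiffAt.comp (g := fun u : E × E => chordLength K u.1 u.2) x₀
      (contDiffAt_chordLength hK hKc hC hx₀ ((mem_overlap_iff hK hKc hx₀).mp hy).1)
      (by fun_prop : ContDiffAt ℝ 2 (fun x : E => ((y : E), x)) x₀)
  refine ((hchord.sub (contDiffAt_const (c := 1))).mul
    (contDiffAt_const (c := ν.real univ))).congr_of_eventuallyEq ?_
  filter_upwards [eventually_mem_overlap hy, eventually_ne_nhds hx₀] with x hy hx
  obtain ⟨hcross, hlt⟩ := (mem_overlap_iff hK hKc hx).mp hy
  rw [lintegral_unique]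
  change (volume {s : ℝ | (y : E) + s • x ∈ translateInter K x} * ν univ).toReal = _
  rw [volume_chord_translateInter hK hKc hx hcross, ENNReal.toReal_mul,
    ENNReal.toReal_ofReal (sub_nonneg.mpr hlt.le), Measure.real]

variable [BorelSpace E]

theorem lintegral_volume_chord_eq_setIntegral (hK : Convex ℝ K) (hKc : IsCompact K)
    (hC : HasC2PositiveCurvatureBoundary K) {f : E →L[ℝ] ℝ} [Nontrivial f.ker]
    (ν : Measure f.ker) [ν.IsAddHaarMeasure] {y : f.ker} {x : E} (hfx : f x ≠ 0)
    (hy : (y : E) ∈ overlap K x) :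
    ∫⁻ w : f.ker, volume {s : ℝ | (w : E) + s • x ∈ translateInter K x} ∂ν =
      ENNReal.ofReal (∫ q in Metric.sphere (0 : f.ker) 1 ×ˢ Icc (0 : ℝ) 1,
        polarDensity K (Module.finrank ℝ f.ker - 1) y (x, q.1, q.2)
          ∂(ν.toSphere.map Subtype.val).prod volume) := by
  have hKs := hC.strictConvex hK hKc.isClosed
  have hmeas : Measurable fun w : f.ker =>
      volume {s : ℝ | ((y + w : f.ker) : E) + s • x ∈ translateInter K x} :=
    measurable_measure_prodMk_left <|
      (show Continuous fun p : f.ker × ℝ => ((y + p.1 : f.ker) : E) + p.2 • x by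
        fun_prop).measurable (isCompact_translateInter hKc x).measurableSet
  rw [← lintegral_add_left_eq_self _ y, lintegral_eq_lintegral_toSphere ν hmeas,
    ← lintegral_sphere_prod_eq_ofReal_setIntegral]
  · refine lintegral_congr fun ξ => ?_
    obtain ⟨hx, hξ⟩ := ne_zero_and_notMem_span_singleton hfx ξ.2
    exact lintegral_ray_eq_lintegral_polarDensity hKs hKc hx hy hξ _
  · exact fun q hq => ((contDiffAt_polarDensity_ker hK hKc hC hfx hy _ hq).continuousAt.comp
      (f := fun q => (x, q)) (by fun_prop)).continuousWithinAt
  · intro q hq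
    obtain ⟨hx, hξ⟩ := ne_zero_and_notMem_span_singleton hfx hq.1
    exact polarDensity_nonneg hKs hKc hx hy hξ hq.2 _

theorem contDiffAt_lintegral_volume_chord_of_nontrivial (hK : Convex ℝ K) (hKc : IsCompact K)
    (hC : HasC2PositiveCurvatureBoundary K) {f : E →L[ℝ] ℝ} [Nontrivial f.ker]
    (ν : Measure f.ker) [ν.IsAddHaarMeasure] {y : f.ker} {x₀ : E} (hfx : f x₀ ≠ 0)
    (hy : (y : E) ∈ overlap K x₀) :
    ContDiffAt ℝ 2 (fun x => (∫⁻ w : f.ker,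
      volume {s : ℝ | (w : E) + s • x ∈ translateInter K x} ∂ν).toReal) x₀ := by
  have : ProperSpace f.ker := FiniteDimensional.proper ℝ f.ker
  have hcompact : IsCompact (Metric.sphere (0 : f.ker) 1 ×ˢ Icc (0 : ℝ) 1) :=
    (isCompact_sphere _ _).prod isCompact_Icc
  refine (contDiffAt_setIntegral (ν := (ν.toSphere.map Subtype.val).prod volume) 2 hcompact
    fun q hq => contDiffAt_polarDensity_ker hK hKc hC hfx hy
      (Module.finrank ℝ f.ker - 1) hq).congr_of_eventuallyEq ?_
  filter_upwards [f.continuous.continuousAt.eventually_ne hfx, eventually_mem_overlap hy]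
    with x hfx hy
  rw [lintegral_volume_chord_eq_setIntegral hK hKc hC ν hfx hy,
    ENNReal.toReal_ofReal (setIntegral_nonneg hcompact.measurableSet fun q hq => ?_)]
  obtain ⟨hx, hξ⟩ := ne_zero_and_notMem_span_singleton hfx hq.1
  exact polarDensity_nonneg (hC.strictConvex hK hKc.isClosed) hKc hx hy hξ hq.2 _

theorem contDiffAt_covariogram (μ : Measure E) [μ.IsAddHaarMeasure] (hK : Convex ℝ K)
    (hKc : IsCompact K) (hC : HasC2PositiveCurvatureBoundary K) {x₀ : E} (hx₀ : x₀ ≠ 0)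
    (hne : (overlap K x₀).Nonempty) : ContDiffAt ℝ 2 (covariogram μ K) x₀ := by
  obtain ⟨f, hf⟩ := SeparatingDual.exists_eq_one (R := ℝ) hx₀
  have hfx₀ : f x₀ ≠ 0 := hf.trans_ne one_ne_zero
  obtain ⟨c, hc⟩ :=
    exists_measure_eq_lintegral_volume_line μ hf (Measure.addHaar : Measure f.ker)
  obtain ⟨y, hy⟩ : ∃ y : f.ker, (y : E) ∈ overlap K x₀ := by
    obtain ⟨z, s, hs, hs'⟩ := hne
    refine ⟨⟨z - f z • x₀, by simp [hf]⟩, s + f z, ?_, ?_⟩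
    · convert hs using 1
      module
    · convert hs' using 1
      module
  have hchords : ContDiffAt ℝ 2 (fun x => (∫⁻ w : f.ker,
      volume {s : ℝ | (w : E) + s • x ∈ translateInter K x} ∂Measure.addHaar).toReal) x₀ := by
    rcases subsingleton_or_nontrivial f.ker with hker | hker
    · exact contDiffAt_lintegral_volume_chord_of_subsingleton hK hKc hC _ hx₀ hy
    · exact contDiffAt_lintegral_volume_chord_of_nontrivial hK hKc hC _ hfx₀ hy
  refine (((contDiffAt_const (c := (c : ℝ))).mul
    f.contDiff.contDiffAt).mul hchords).congr_of_eventuallyEq ?_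
  filter_upwards [f.continuous.continuousAt.eventually
    (lt_mem_nhds (hf.symm ▸ one_pos : 0 < f x₀))] with x hx
  rw [covariogram, Measure.real, hc x hx.ne' _ (isCompact_translateInter hKc x).measurableSet,
    abs_of_pos hx, ENNReal.toReal_mul, ENNReal.toReal_mul, ENNReal.toReal_ofReal hx.le,
    ENNReal.coe_toReal]

end Covariogram

theorem eventually_forall_mem_of_isCompact {X Y Z : Type*} [TopologicalSpace X]
    [TopologicalSpace Y] [TopologicalSpace Z] {A : Set Y} (hA : IsCompact A) {O : Set Z}
    (hO : IsOpen O) {F : X × Y → Z} (hF : Continuous F) {a : X} (h : ∀ y ∈ A, F (a, y) ∈ O) :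
    ∀ᶠ t in 𝓝 a, ∀ y ∈ A, F (t, y) ∈ O :=
  hA.eventually_forall_of_forall_eventually fun y hy =>
    hF.continuousAt.eventually_mem (hO.mem_nhds (h y hy))

theorem isCompact_mem_and_notMem_interior {Y : Type*} [TopologicalSpace Y] {A : Set Y}
    (hA : IsCompact A) {f : Y → Y} (hf : Continuous f) :
    IsCompact {z | z ∈ A ∧ f z ∉ interior A} :=
  hA.inter_right (isOpen_interior.isClosed_compl.preimage hf)

section SeparatingFunctional

variable {E : Type*} [NormedAddCommGroup E] [NormedSpace ℝ E] {K : Set E}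

theorem exists_pos_add_smul_mem_of_mem_interior {z : E} (hz : z ∈ interior K) (x : E) :
    ∃ ε > (0 : ℝ), z + ε • x ∈ K := by
  have hev : ∀ᶠ ε in 𝓝[>] (0 : ℝ), z + ε • x ∈ K :=
    ((tendsto_add_smul_nhds_zero z x).mono_left nhdsWithin_le_nhds).eventually_mem
      (mem_interior_iff_mem_nhds.mp hz)
  exact (hev.and self_mem_nhdsWithin).exists.imp fun _ h => ⟨h.2, h.1⟩

theorem exists_longest_chord (hKc : IsCompact K) {x : E} (hx : x ≠ 0)
    (hne : (overlap K x).Nonempty) :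
    ∃ l > (1 : ℝ), ∃ p ∈ K, p + l • x ∈ K ∧ ∀ z ∈ interior K, z - l • x ∉ interior K := by
  obtain ⟨z₀, s, hs, hs'⟩ := hne
  have hcompact : IsCompact ((fun l : ℝ => l • x) ⁻¹' (K - K)) :=
    (isClosedEmbedding_smul_left hx).isCompact_preimage
      (by simpa only [sub_eq_add_neg] using hKc.add hKc.neg)
  obtain ⟨ε₀, hε₀, hε₀K⟩ := exists_pos_add_smul_mem_of_mem_interior hs x
  have hmem : 1 + ε₀ ∈ (fun l : ℝ => l • x) ⁻¹' (K - K) :=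
    ⟨_, hε₀K, _, interior_subset hs', by module⟩
  obtain ⟨l, ⟨q, hq, p, hp, hpq⟩, hmax⟩ := hcompact.exists_isMaxOn ⟨_, hmem⟩ continuousOn_id
  have hle : 1 + ε₀ ≤ l := hmax hmem
  refine ⟨l, by linarith, p, hp, sub_eq_iff_eq_add'.mp hpq ▸ hq, fun z hz hz' => ?_⟩
  obtain ⟨ε, hε, hεK⟩ := exists_pos_add_smul_mem_of_mem_interior hz x
  have hlonger : l + ε ≤ l := hmax ⟨_, hεK, _, interior_subset hz', by module⟩
  linarith

theorem exists_forall_interior_lt_of_longest_chord (hK : Convex ℝ K)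
    (hint : (interior K).Nonempty) {p w : E} (hp : p ∈ K) (hq : p + w ∈ K)
    (hdisj : ∀ z ∈ interior K, z - w ∉ interior K) :
    ∃ θ : E →L[ℝ] ℝ, ∀ z ∈ interior K, θ p < θ z ∧ θ z < θ (p + w) := by
  obtain ⟨θ, u, hlt, hgt⟩ := geometric_hahn_banach_open_open hK.interior isOpen_interior
    (by simpa only [sub_eq_add_neg] using hK.interior.translate_preimage_left (-w))
    (isOpen_interior.preimage (f := fun z => z - w) (by fun_prop))
    (Set.disjoint_left.mpr hdisj)
  have hgt' : ∀ z ∈ interior K, u < θ z + θ w := fun z hz => by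
    simpa only [map_add] using hgt (z + w) (by simpa using hz)
  have hKcl : K ⊆ closure (interior K) := by
    rw [hK.closure_interior_eq_closure_of_nonempty_interior hint]
    exact subset_closure
  have hqu : θ (p + w) ≤ u := closure_minimal (fun z hz => (hlt z hz).le)
    (isClosed_le θ.continuous continuous_const) (hKcl hq)
  have hup : u ≤ θ p + θ w := closure_minimal (fun z hz => (hgt' z hz).le)
    (isClosed_le continuous_const (θ.continuous.add continuous_const)) (hKcl hp)
  rw [map_add] at hqu
  refine ⟨θ, fun z hz => ⟨?_, ?_⟩⟩
  · linarith [hgt' z hz]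
  · rw [map_add]
    linarith [hlt z hz]

theorem lt_of_forall_interior_lt (hK : StrictConvex ℝ K) {θ : E →L[ℝ] ℝ} {q z : E} (hq : q ∈ K)
    (hθ : ∀ w ∈ interior K, θ w < θ q) (hz : z ∈ K) (hzq : z ≠ q) : θ z < θ q := by
  have hmid := hθ _ (hK hz hq hzq one_half_pos one_half_pos (add_halves 1))
  simp only [map_add, map_smul, smul_eq_mul] at hmid
  linarith

/-- The functional `θ` is larger at `q ∈ K` than at the points of `K` outside the interior of
`x + K`, smaller at `x + p ∈ x + K` than at the points of `x + K` outside the interior of `K`, and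
`θ (x + p) < θ q`. So for levels slightly below `θ q` the slices of `K ∩ (x + K)` along `θ` are
those of `K`, and for levels slightly above `θ (x + p)` they are those of `x + K`. -/
structure IsSeparating (K : Set E) (x : E) (θ : E →L[ℝ] ℝ) (p q : E) : Prop where
  bot_mem : p ∈ K
  top_mem : q ∈ K
  add_lt : θ p + θ x < θ q
  lt_top : ∀ z ∈ K, z - x ∉ interior K → θ z < θ q
  bot_lt : ∀ z ∈ K, z + x ∉ interior K → θ p < θ z

theorem exists_isSeparating (hK : StrictConvex ℝ K) (hKc : IsCompact K) {x : E} (hx : x ≠ 0)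
    (hne : (overlap K x).Nonempty) : ∃ θ p q, IsSeparating K x θ p q := by
  have hint : (interior K).Nonempty := hne.elim fun _ ⟨_, hs, _⟩ => ⟨_, hs⟩
  obtain ⟨l, hl, p, hp, hq, hdisj⟩ := exists_longest_chord hKc hx hne
  obtain ⟨θ, hθ⟩ := exists_forall_interior_lt_of_longest_chord hK.convex hint hp hq hdisj
  have hl₀ : 0 < l := by linarith
  have hpq : p ≠ p + l • x := by simp [hl₀.ne', hx]
  have hθx : 0 < θ x := by
    obtain ⟨z, hz⟩ := hint
    have hlx := (hθ z hz).1.trans (hθ z hz).2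
    rw [map_add, map_smul, smul_eq_mul, lt_add_iff_pos_right] at hlx
    exact pos_of_mul_pos_right hlx hl₀.le
  have hinv : l⁻¹ < 1 := inv_lt_one_of_one_lt₀ hl
  have hchord : ∀ a : ℝ, 0 < a → a < 1 → p + (a * l) • x ∈ interior K := fun a ha ha' => by
    convert hK hp hq hpq (sub_pos.mpr ha') ha (sub_add_cancel 1 a) using 1
    module
  refine ⟨θ, p, p + l • x, hp, hq, ?_, fun z hz hzx => ?_, fun z hz hzx => ?_⟩
  · rw [map_add, map_smul, smul_eq_mul]
    nlinarith
  · refine lt_of_forall_interior_lt hK hq (fun w hw => (hθ w hw).2) hz ?_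
    rintro rfl
    refine hzx ?_
    convert hchord (1 - l⁻¹) (sub_pos.mpr hinv) (by simpa using hl₀) using 1
    rw [sub_mul, inv_mul_cancel₀ hl₀.ne']
    module
  · refine neg_lt_neg_iff.mp (lt_of_forall_interior_lt hK (θ := -θ) hp
      (fun w hw => neg_lt_neg (hθ w hw).1) hz ?_)
    rintro rfl
    refine hzx ?_
    convert hchord l⁻¹ (inv_pos.mpr hl₀) hinv using 1
    rw [inv_mul_cancel₀ hl₀.ne', one_smul]

theorem IsSeparating.eventually_add_smul (hKc : IsCompact K) {x : E} {θ : E →L[ℝ] ℝ} {p q : E}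
    (h : IsSeparating K x θ p q) (w : E →L[ℝ] ℝ) :
    ∀ᶠ η in 𝓝 (0 : ℝ), IsSeparating K x (θ + η • w) p q := by
  have hadd : ∀ᶠ η : ℝ in 𝓝 0, 0 < θ q + η * w q - (θ p + η * w p + (θ x + η * w x)) :=
    (by fun_prop : Continuous fun η : ℝ =>
      θ q + η * w q - (θ p + η * w p + (θ x + η * w x))).continuousAt.eventually_mem
        (lt_mem_nhds (a := 0) (by simpa using h.add_lt))
  have htop := eventually_forall_mem_of_isCompact
    (isCompact_mem_and_notMem_interior hKc (f := fun z => z - x) (by fun_prop))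
    (isOpen_Ioi (a := 0)) (a := (0 : ℝ))
    (F := fun u : ℝ × E => θ q + u.1 * w q - (θ u.2 + u.1 * w u.2))
    (by fun_prop) fun z hz => by simpa using h.lt_top z hz.1 hz.2
  have hbot := eventually_forall_mem_of_isCompact
    (isCompact_mem_and_notMem_interior hKc (f := fun z => z + x) (by fun_prop))
    (isOpen_Ioi (a := 0)) (a := (0 : ℝ))
    (F := fun u : ℝ × E => θ u.2 + u.1 * w u.2 - (θ p + u.1 * w p))
    (by fun_prop) fun z hz => by simpa using h.bot_lt z hz.1 hz.2
  filter_upwards [hadd, htop, hbot] with η hη_add hη_top hη_bot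
  exact ⟨h.bot_mem, h.top_mem, sub_pos.mp hη_add,
    fun z hz hzx => sub_pos.mp (hη_top z ⟨hz, hzx⟩),
    fun z hz hzx => sub_pos.mp (hη_bot z ⟨hz, hzx⟩)⟩

theorem exists_isSeparating_apply_ne_zero (hK : StrictConvex ℝ K) (hKc : IsCompact K) {x v : E}
    (hx : x ≠ 0) (hv : v ≠ 0) (hne : (overlap K x).Nonempty) :
    ∃ θ p q, IsSeparating K x θ p q ∧ θ v ≠ 0 := by
  obtain ⟨θ, p, q, h⟩ := exists_isSeparating hK hKc hx hne
  by_cases hθv : θ v = 0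
  · obtain ⟨w, hw⟩ := SeparatingDual.exists_eq_one (R := ℝ) hv
    obtain ⟨η, hsep, hη⟩ := (((h.eventually_add_smul hKc w).filter_mono
      nhdsWithin_le_nhds).and (self_mem_nhdsWithin (s := {0}ᶜ))).exists
    exact ⟨_, p, q, hsep, by simpa [hθv, hw] using hη⟩
  · exact ⟨θ, p, q, h, hθv⟩

end SeparatingFunctional

section TranslationCaps

variable {E : Type*} [NormedAddCommGroup E] [NormedSpace ℝ E] {K : Set E} {x v : E}
  {θ : E →L[ℝ] ℝ}

/-- For the translation vectors `y = x + t • v` with `|t| ≤ t₀`, the part of `K` on which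
`c₁ ≤ θ` lies inside `y + K`, the part of `y + K` on which `θ ≤ c₀ + θ y` lies inside `K`, and the
levels `c₀ + θ x < c₁` keep these two caps of `K ∩ (x + K)` apart. -/
structure HasTranslationCaps (K : Set E) (x v : E) (θ : E →L[ℝ] ℝ) (c₀ c₁ t₀ : ℝ) : Prop where
  t₀_pos : 0 < t₀
  add_lt : c₀ + θ x < c₁
  sub_mem : ∀ t : ℝ, |t| ≤ t₀ → ∀ z ∈ K, c₁ ≤ θ z → z - (x + t • v) ∈ interior K
  add_mem : ∀ t : ℝ, |t| ≤ t₀ → ∀ z ∈ K, θ z ≤ c₀ → z + (x + t • v) ∈ interior K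
  exists_lt_apply : ∃ z ∈ interior K, c₁ < θ z
  exists_apply_lt : ∃ z ∈ interior K, θ z < c₀

theorem IsSeparating.exists_levels (hKc : IsCompact K) {p q : E} (h : IsSeparating K x θ p q) :
    ∃ c₀ c₁ : ℝ, θ p < c₀ ∧ c₀ + θ x < c₁ ∧ c₁ < θ q ∧
      (∀ z ∈ K, c₁ ≤ θ z → z - x ∈ interior K) ∧ ∀ z ∈ K, θ z ≤ c₀ → z + x ∈ interior K := by
  have hadd : ∀ᶠ ε : ℝ in 𝓝 0, 0 < θ q - ε - (θ p + ε + θ x) :=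
    (by fun_prop : Continuous fun ε : ℝ => θ q - ε - (θ p + ε + θ x)).continuousAt.eventually_mem
      (lt_mem_nhds (a := 0) (by simpa using h.add_lt))
  have htop := eventually_forall_mem_of_isCompact
    (isCompact_mem_and_notMem_interior hKc (f := fun z => z - x) (by fun_prop))
    (isOpen_Ioi (a := 0)) (a := (0 : ℝ)) (F := fun u : ℝ × E => θ q - u.1 - θ u.2)
    (by fun_prop) fun z hz => by simpa using h.lt_top z hz.1 hz.2
  have hbot := eventually_forall_mem_of_isCompact
    (isCompact_mem_and_notMem_interior hKc (f := fun z => z + x) (by fun_prop))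
    (isOpen_Ioi (a := 0)) (a := (0 : ℝ)) (F := fun u : ℝ × E => θ u.2 - (θ p + u.1))
    (by fun_prop) fun z hz => by simpa using h.bot_lt z hz.1 hz.2
  obtain ⟨ε, ⟨hε_add, hε_top, hε_bot⟩, hε⟩ := (((hadd.and (htop.and hbot)).filter_mono
    nhdsWithin_le_nhds).and (self_mem_nhdsWithin (s := Ioi 0))).exists
  refine ⟨θ p + ε, θ q - ε, lt_add_of_pos_right _ hε, sub_pos.mp hε_add, sub_lt_self _ hε,
    fun z hz hcz => ?_, fun z hz hzc => ?_⟩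
  · by_contra hzx
    exact (sub_pos.mp (hε_top z ⟨hz, hzx⟩)).not_ge hcz
  · by_contra hzx
    exact (sub_pos.mp (hε_bot z ⟨hz, hzx⟩)).not_ge hzc

theorem IsSeparating.exists_hasTranslationCaps (hK : Convex ℝ K) (hKc : IsCompact K)
    (hint : (interior K).Nonempty) {p q : E} (h : IsSeparating K x θ p q) (v : E) :
    ∃ c₀ c₁ t₀, HasTranslationCaps K x v θ c₀ c₁ t₀ := by
  obtain ⟨c₀, c₁, hpc₀, hc₀c₁, hc₁q, htop, hbot⟩ := h.exists_levels hKc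
  have hsub := eventually_forall_mem_of_isCompact
    (hKc.inter_right (isClosed_le (continuous_const (y := c₁)) θ.continuous)) isOpen_interior
    (a := (0 : ℝ)) (F := fun u : ℝ × E => u.2 - (x + u.1 • v)) (by fun_prop)
    fun z hz => by simpa using htop z hz.1 hz.2
  have hadd := eventually_forall_mem_of_isCompact
    (hKc.inter_right (isClosed_le θ.continuous (continuous_const (y := c₀)))) isOpen_interior
    (a := (0 : ℝ)) (F := fun u : ℝ × E => u.2 + (x + u.1 • v)) (by fun_prop)
    fun z hz => by simpa using hbot z hz.1 hz.2
  obtain ⟨t₀, ht₀, hsmall⟩ := Metric.nhds_basis_closedBall.eventually_iff.mp (hsub.and hadd)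
  simp only [mem_closedBall_zero_iff, Real.norm_eq_abs] at hsmall
  have hKcl : K ⊆ closure (interior K) := by
    rw [hK.closure_interior_eq_closure_of_nonempty_interior hint]
    exact subset_closure
  refine ⟨c₀, c₁, t₀, ht₀, hc₀c₁, fun t ht z hz hcz => (hsmall ht).1 z ⟨hz, hcz⟩,
    fun t ht z hz hzc => (hsmall ht).2 z ⟨hz, hzc⟩, ?_, ?_⟩
  · exact (mem_closure_iff.mp (hKcl h.top_mem) _ (isOpen_lt continuous_const θ.continuous)
      hc₁q).imp fun _ hz => hz.symm
  · exact (mem_closure_iff.mp (hKcl h.bot_mem) _ (isOpen_lt θ.continuous continuous_const)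
      hpc₀).imp fun _ hz => hz.symm

/-- The part of `K ∩ (x + K)` on which `c ≤ θ`. -/
def upperPart (K : Set E) (θ : E →L[ℝ] ℝ) (x : E) (c : ℝ) : Set E :=
  translateInter K x ∩ {z | c ≤ θ z}

/-- The part of `K ∩ (x + K)` on which `θ < c`. -/
def lowerPart (K : Set E) (θ : E →L[ℝ] ℝ) (x : E) (c : ℝ) : Set E :=
  translateInter K x ∩ {z | θ z < c}

theorem upperPart_subset {c : ℝ} : upperPart K θ x c ⊆ K :=
  inter_subset_left.trans translateInter_subset

theorem lowerPart_subset {c : ℝ} : lowerPart K θ x c ⊆ K :=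
  inter_subset_left.trans translateInter_subset

theorem upperPart_union_lowerPart (c : ℝ) :
    upperPart K θ x c ∪ lowerPart K θ x c = translateInter K x := by
  rw [upperPart, lowerPart, ← inter_union_distrib_left, inter_eq_left]
  exact fun z _ => le_or_gt c (θ z)

theorem disjoint_upperPart_lowerPart (c : ℝ) :
    Disjoint (upperPart K θ x c) (lowerPart K θ x c) :=
  Set.disjoint_left.mpr fun z hz hz' => (show θ z < c from hz'.2).not_ge hz.2

theorem add_mem_translateInter_of_convex (hK : Convex ℝ K) {a b : ℝ} (ha : 0 ≤ a) (hb : 0 ≤ b)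
    (hab : a + b = 1) {x y z w : E} (hz : z ∈ translateInter K x) (hw : w ∈ translateInter K y) :
    a • z + b • w ∈ translateInter K (a • x + b • y) := by
  refine ⟨hK hz.1 hw.1 ha hb hab, ?_⟩
  convert hK hz.2 hw.2 ha hb hab using 1
  module

theorem convex_setOf_mem_translateInter (hK : Convex ℝ K) :
    Convex ℝ {u : E × E | u.2 ∈ translateInter K u.1} :=
  fun _ hu _ hw _ _ ha hb hab => add_mem_translateInter_of_convex hK ha hb hab hu hw

theorem convex_setOf_mem_translateInter_line (hK : Convex ℝ K) (x v : E) :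
    Convex ℝ {u : (ℝ × ℝ) × E | u.2 ∈ translateInter K (x + u.1.2 • v)} := by
  intro u hu w hw a b ha hb hab
  convert add_mem_translateInter_of_convex hK ha hb hab hu hw using 1
  obtain rfl : b = 1 - a := eq_sub_of_add_eq' hab
  have hline : x + (a * u.1.2 + (1 - a) * w.1.2) • v =
      a • (x + u.1.2 • v) + (1 - a) • (x + w.1.2 • v) := by module
  rw [← hline]
  rfl

theorem convex_setOf_mem_upperPart (hK : Convex ℝ K) (θ : E →L[ℝ] ℝ) (x v : E) :
    Convex ℝ {u : (ℝ × ℝ) × E | u.2 ∈ upperPart K θ (x + u.1.2 • v) u.1.1} := by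
  have hlevel : Convex ℝ {u : (ℝ × ℝ) × E | 0 ≤ θ u.2 - u.1.1} :=
    convex_halfSpace_ge (θ.toLinearMap ∘ₗ LinearMap.snd ℝ (ℝ × ℝ) E -
      LinearMap.fst ℝ ℝ ℝ ∘ₗ LinearMap.fst ℝ (ℝ × ℝ) E).isLinear 0
  simp only [sub_nonneg] at hlevel
  exact (convex_setOf_mem_translateInter_line hK x v).inter hlevel

theorem convex_setOf_mem_lowerPart (hK : Convex ℝ K) (θ : E →L[ℝ] ℝ) (x v : E) :
    Convex ℝ {u : (ℝ × ℝ) × E | u.2 ∈ lowerPart K θ (x + u.1.2 • v) u.1.1} := by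
  have hlevel : Convex ℝ {u : (ℝ × ℝ) × E | θ u.2 - u.1.1 < 0} :=
    convex_halfSpace_lt (θ.toLinearMap ∘ₗ LinearMap.snd ℝ (ℝ × ℝ) E -
      LinearMap.fst ℝ ℝ ℝ ∘ₗ LinearMap.fst ℝ (ℝ × ℝ) E).isLinear 0
  simp only [sub_neg] at hlevel
  exact (convex_setOf_mem_translateInter_line hK x v).inter hlevel

namespace HasTranslationCaps

variable {c₀ c₁ t₀ : ℝ}

theorem upperPart_eq (h : HasTranslationCaps K x v θ c₀ c₁ t₀) {t : ℝ} (ht : |t| ≤ t₀) {c : ℝ}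
    (hc : c₁ ≤ c) : upperPart K θ (x + t • v) c = K ∩ {z | c ≤ θ z} :=
  Subset.antisymm (inter_subset_inter_left _ translateInter_subset) fun z hz =>
    ⟨⟨hz.1, interior_subset (h.sub_mem t ht z hz.1 (hc.trans hz.2))⟩, hz.2⟩

theorem preimage_add_lowerPart_eq (h : HasTranslationCaps K x v θ c₀ c₁ t₀) {t : ℝ}
    (ht : |t| ≤ t₀) :
    (fun z => x + t • v + z) ⁻¹' lowerPart K θ (x + t • v) (c₀ + θ x + θ v * t) =
      K ∩ {z | θ z < c₀} := by
  have hlevel : ∀ z, θ (x + t • v + z) < c₀ + θ x + θ v * t ↔ θ z < c₀ := fun z => by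
    simp only [map_add, map_smul, smul_eq_mul]
    constructor <;> intro hz <;> linarith
  ext z
  simp only [lowerPart, translateInter, mem_preimage, mem_inter_iff, mem_ofPred_eq,
    add_sub_cancel_left, hlevel]
  refine ⟨fun hz => ⟨hz.1.2, hz.2⟩, fun hz => ⟨⟨?_, hz.1⟩, hz.2⟩⟩
  rw [add_comm]
  exact interior_subset (h.add_mem t ht z hz.1 (le_of_lt hz.2))

theorem abs_zero_le (h : HasTranslationCaps K x v θ c₀ c₁ t₀) : |(0 : ℝ)| ≤ t₀ :=
  abs_zero.trans_le h.t₀_pos.le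

theorem exists_mem_translateInter_Ioo (h : HasTranslationCaps K x v θ c₀ c₁ t₀)
    (hK : Convex ℝ K) {c : ℝ} (hc : c₀ + θ x < c) :
    ∃ z ∈ translateInter (interior K) x, θ z ∈ Ioo (c₀ + θ x) c := by
  obtain ⟨p, hpK, hp⟩ := h.exists_apply_lt
  obtain ⟨q, hqK, hq⟩ := h.exists_lt_apply
  have hp_mem : p + x ∈ translateInter (interior K) x :=
    ⟨by simpa using h.add_mem 0 h.abs_zero_le p (interior_subset hpK) hp.le, by simpa using hpK⟩
  have hq_mem : q ∈ translateInter (interior K) x :=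
    ⟨hqK, by simpa using h.sub_mem 0 h.abs_zero_le q (interior_subset hqK) hq.le⟩
  have hconv : Convex ℝ (translateInter (interior K) x) := fun z hz w hw a b ha hb hab => by
    simpa only [← add_smul, hab, one_smul] using
      add_mem_translateInter_of_convex hK.interior ha hb hab hz hw
  have hθ := (hconv.isPreconnected.image θ θ.continuous.continuousOn).ordConnected
  obtain ⟨r, hr₀, hr⟩ := exists_between (lt_min hc h.add_lt)
  obtain ⟨hrc, hrc₁⟩ := lt_min_iff.mp hr
  obtain ⟨z, hz, rfl⟩ : r ∈ θ '' translateInter (interior K) x :=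
    hθ.out (mem_image_of_mem θ hp_mem) (mem_image_of_mem θ hq_mem)
      ⟨by rw [map_add]; linarith, by linarith⟩
  exact ⟨z, hz, hr₀, hrc⟩

end HasTranslationCaps

section Measure

variable [MeasurableSpace E]

theorem measurableSet_lowerPart [OpensMeasurableSpace E] (hKc : IsCompact K) (x : E) (c : ℝ) :
    MeasurableSet (lowerPart K θ x c) :=
  (isCompact_translateInter hKc x).measurableSet.inter
    (isOpen_lt θ.continuous continuous_const).measurableSet

theorem measurableSet_upperPart [OpensMeasurableSpace E] (hKc : IsCompact K) (x : E) (c : ℝ) :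
    MeasurableSet (upperPart K θ x c) :=
  (isCompact_translateInter hKc x).measurableSet.inter
    (isClosed_le continuous_const θ.continuous).measurableSet

variable {μ : Measure E} [IsFiniteMeasureOnCompacts μ]

theorem measureReal_upperPart_add_lowerPart [OpensMeasurableSpace E] (hKc : IsCompact K) (x : E)
    (θ : E →L[ℝ] ℝ) (c : ℝ) :
    μ.real (upperPart K θ x c) + μ.real (lowerPart K θ x c) = covariogram μ K x := by
  have hfin : ∀ S ⊆ K, μ S ≠ ∞ := fun S hS =>
    ((measure_mono hS).trans_lt hKc.measure_lt_top).ne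
  rw [covariogram, ← upperPart_union_lowerPart (θ := θ) c,
    measureReal_union (disjoint_upperPart_lowerPart c) (measurableSet_lowerPart hKc x c)
      (hfin _ upperPart_subset) (hfin _ lowerPart_subset)]

theorem measureReal_lt_of_isOpen_subset_diff {Y : Type*} [TopologicalSpace Y]
    [MeasurableSpace Y] [OpensMeasurableSpace Y] {ν : Measure Y} [ν.IsOpenPosMeasure]
    {S T U : Set Y} (hST : S ⊆ T) (hT : ν T ≠ ∞) (hU : IsOpen U) (hne : U.Nonempty)
    (hUT : U ⊆ T \ S) : ν.real S < ν.real T := by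
  have hfin : ∀ R ⊆ T, ν R ≠ ∞ := fun R hR => ((measure_mono hR).trans_lt hT.lt_top).ne
  have hUpos : 0 < ν.real U :=
    ENNReal.toReal_pos (hU.measure_pos ν hne).ne' (hfin U (hUT.trans sdiff_subset))
  calc ν.real S < ν.real S + ν.real U := lt_add_of_pos_right _ hUpos
    _ = ν.real (S ∪ U) := (measureReal_union (disjoint_sdiff_right.mono_right hUT)
      hU.measurableSet (hfin S hST) (hfin U (hUT.trans sdiff_subset))).symm
    _ ≤ ν.real T := measureReal_mono (union_subset hST (hUT.trans sdiff_subset)) hT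

theorem measureReal_pos_of_isOpen_subset {Y : Type*} [TopologicalSpace Y] [MeasurableSpace Y]
    [OpensMeasurableSpace Y] {ν : Measure Y} [ν.IsOpenPosMeasure] {T U : Set Y} (hT : ν T ≠ ∞)
    (hU : IsOpen U) (hne : U.Nonempty) (hUT : U ⊆ T) : 0 < ν.real T := by
  simpa using measureReal_lt_of_isOpen_subset_diff (empty_subset T) hT hU hne (by simpa using hUT)

namespace HasTranslationCaps

variable [OpensMeasurableSpace E] [μ.IsOpenPosMeasure] {c₀ c₁ t₀ : ℝ}

theorem measureReal_upperPart_pos (h : HasTranslationCaps K x v θ c₀ c₁ t₀)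
    (hKc : IsCompact K) : 0 < μ.real (upperPart K θ x c₁) := by
  have hupper := h.upperPart_eq h.abs_zero_le le_rfl
  rw [zero_smul, add_zero] at hupper
  obtain ⟨z, hzK, hz⟩ := h.exists_lt_apply
  rw [hupper]
  exact measureReal_pos_of_isOpen_subset
    ((measure_mono inter_subset_left).trans_lt hKc.measure_lt_top).ne
    (isOpen_interior.inter (isOpen_lt continuous_const θ.continuous)) ⟨z, hzK, hz⟩
    (inter_subset_inter interior_subset (ofPred_subset_ofPred.mpr fun _ => le_of_lt))

theorem measureReal_cap_pos (h : HasTranslationCaps K x v θ c₀ c₁ t₀)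
    (hKc : IsCompact K) : 0 < μ.real (K ∩ {z | θ z < c₀}) := by
  obtain ⟨z, hzK, hz⟩ := h.exists_apply_lt
  exact measureReal_pos_of_isOpen_subset
    ((measure_mono inter_subset_left).trans_lt hKc.measure_lt_top).ne
    (isOpen_interior.inter (isOpen_lt θ.continuous continuous_const)) ⟨z, hzK, hz⟩
    (inter_subset_inter_left _ interior_subset)

theorem measureReal_upperPart_lt (h : HasTranslationCaps K x v θ c₀ c₁ t₀) (hK : Convex ℝ K)
    (hKc : IsCompact K) {c : ℝ} (hc : c₀ + θ x < c) :
    μ.real (upperPart K θ x c) < μ.real (upperPart K θ x (c₀ + θ x)) := by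
  obtain ⟨z, hz, hzc⟩ := h.exists_mem_translateInter_Ioo hK hc
  have hopen : IsOpen (translateInter (interior K) x ∩ θ ⁻¹' Ioo (c₀ + θ x) c) :=
    (isOpen_interior.inter (isOpen_interior.preimage (f := fun z => z - x) (by fun_prop))).inter
      (isOpen_Ioo.preimage θ.continuous)
  refine measureReal_lt_of_isOpen_subset_diff
    (inter_subset_inter_right _ fun _ hw => hc.le.trans hw)
    ((measure_mono upperPart_subset).trans_lt hKc.measure_lt_top).ne hopen ⟨z, hz, hzc⟩ ?_
  exact fun w hw => ⟨⟨⟨interior_subset hw.1.1, interior_subset hw.1.2⟩, hw.2.1.le⟩,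
    fun hw' => hw.2.2.not_ge hw'.2⟩

end HasTranslationCaps

end Measure

variable [FiniteDimensional ℝ E] [MeasurableSpace E] [BorelSpace E] {μ : Measure E}
  [μ.IsAddHaarMeasure]

theorem isLogConcave_measureReal_upperPart (hK : Convex ℝ K) (hKc : IsCompact K)
    (θ : E →L[ℝ] ℝ) (x v : E) :
    IsLogConcave fun p : ℝ × ℝ => μ.real (upperPart K θ (x + p.2 • v) p.1) :=
  isLogConcave_measureReal_preimage_prodMk μ (convex_setOf_mem_upperPart hK θ x v)
    (fun p => measurableSet_upperPart hKc (x + p.2 • v) p.1)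
    fun p => ((measure_mono (upperPart_subset (x := x + p.2 • v) (c := p.1))).trans_lt
      hKc.measure_lt_top).ne

theorem isLogConcave_measureReal_lowerPart (hK : Convex ℝ K) (hKc : IsCompact K)
    (θ : E →L[ℝ] ℝ) (x v : E) :
    IsLogConcave fun p : ℝ × ℝ => μ.real (lowerPart K θ (x + p.2 • v) p.1) :=
  isLogConcave_measureReal_preimage_prodMk μ (convex_setOf_mem_lowerPart hK θ x v)
    (fun p => measurableSet_lowerPart hKc (x + p.2 • v) p.1)
    fun p => ((measure_mono (lowerPart_subset (x := x + p.2 • v) (c := p.1))).trans_lt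
      hKc.measure_lt_top).ne

theorem HasTranslationCaps.isSlidingCut {c₀ c₁ t₀ : ℝ} (h : HasTranslationCaps K x v θ c₀ c₁ t₀)
    (hK : Convex ℝ K) (hKc : IsCompact K) (hθv : 0 < θ v) :
    IsSlidingCut (fun p => μ.real (upperPart K θ (x + p.2 • v) p.1))
      (fun p => μ.real (lowerPart K θ (x + p.2 • v) p.1))
      (fun t => covariogram μ K (x + t • v)) t₀ c₁ (c₀ + θ x) (θ v) := by
  have hfin : ∀ S ⊆ K, μ S ≠ ∞ := fun S hS =>
    ((measure_mono hS).trans_lt hKc.measure_lt_top).ne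
  obtain ⟨M, hM⟩ := (hKc.image θ.continuous).bddAbove
  obtain ⟨m, hm⟩ := (hKc.image θ.continuous).bddBelow
  have hlower : ∀ t : ℝ, |t| ≤ t₀ → μ.real (lowerPart K θ (x + t • v) (c₀ + θ x + θ v * t)) =
      μ.real (K ∩ {z | θ z < c₀}) := fun t ht => by
    rw [← h.preimage_add_lowerPart_eq ht, measureReal_def, measureReal_def, measure_preimage_add]
  have hlower₀ : μ.real (lowerPart K θ (x + (0 : ℝ) • v) (c₀ + θ x)) =
      μ.real (K ∩ {z | θ z < c₀}) := by simpa using hlower 0 h.abs_zero_le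
  exact {
    t₀_pos := h.t₀_pos
    speed_pos := hθv
    c₂_lt_c₁ := h.add_lt
    add_eq := fun c t => measureReal_upperPart_add_lowerPart hKc _ θ c
    antitone_upper := fun t c c' hc => measureReal_mono
      (inter_subset_inter_right _ fun _ hz => hc.trans hz) (hfin _ upperPart_subset)
    isLogConcave_upper := isLogConcave_measureReal_upperPart hK hKc θ x v
    isLogConcave_lower := isLogConcave_measureReal_lowerPart hK hKc θ x v
    exists_upper_eq_zero := by
      refine ⟨M + 1, fun c t hc => ?_⟩
      rw [eq_empty_of_forall_notMem (s := upperPart K θ (x + t • v) c) fun z hz => ?_,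
        measureReal_empty]
      linarith [hM (mem_image_of_mem θ hz.1.1), show c ≤ θ z from hz.2]
    exists_lower_eq_zero := by
      refine ⟨m, ?_⟩
      rw [eq_empty_of_forall_notMem (s := lowerPart K θ (x + (0 : ℝ) • v) m) fun z hz => ?_,
        measureReal_empty]
      exact (hm (mem_image_of_mem θ hz.1.1)).not_gt hz.2
    upper_eq := fun c t ht hc => by rw [h.upperPart_eq ht hc, h.upperPart_eq h.abs_zero_le hc]
    lower_eq := fun t ht => (hlower t ht).trans hlower₀.symm
    upper_pos := by simpa using h.measureReal_upperPart_pos hKc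
    lower_pos := (h.measureReal_cap_pos hKc).trans_eq hlower₀.symm
    upper_lt := fun c hc => by simpa using h.measureReal_upperPart_lt hK hKc hc }

theorem exists_covariogram_add_smul_lt (hK : StrictConvex ℝ K) (hKc : IsCompact K) (hx : x ≠ 0)
    (hv : v ≠ 0) (hne : (overlap K x).Nonempty) :
    ∃ η > 0, ∀ t₁ > 0, ∃ t : ℝ, |t| < t₁ ∧
      covariogram μ K (x + t • v) < covariogram μ K x - η * t ^ 2 := by
  have hint : (interior K).Nonempty := hne.elim fun _ ⟨_, hs, _⟩ => ⟨_, hs⟩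
  obtain ⟨θ, p, q, hsep, hθv⟩ := exists_isSeparating_apply_ne_zero hK hKc hx hv hne
  have hpos : ∀ w : E, 0 < θ w → ∃ η > 0, ∀ t₁ > 0, ∃ t : ℝ, |t| < t₁ ∧
      covariogram μ K (x + t • w) < covariogram μ K x - η * t ^ 2 := fun w hw => by
    obtain ⟨c₀, c₁, t₀, hcaps⟩ := hsep.exists_hasTranslationCaps hK.convex hKc hint w
    simpa using (hcaps.isSlidingCut hK.convex hKc hw (μ := μ)).exists_sub_mul_sq_gt
  rcases hθv.lt_or_gt with hneg | hθv
  · obtain ⟨η, hη, hlt⟩ := hpos (-v) (by simpa using hneg)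
    refine ⟨η, hη, fun t₁ ht₁ => ?_⟩
    obtain ⟨t, ht, htlt⟩ := hlt t₁ ht₁
    exact ⟨-t, by rwa [abs_neg], by simpa using htlt⟩
  · exact hpos v hθv

end TranslationCaps

section LogConcaveSuperlevel

theorem IsLogConcave.lt_apply_add {V : Type*} [AddCommGroup V] [Module ℝ V] {f : V → ℝ}
    (hf : IsLogConcave f) {c a b : ℝ} {x y : V} (hc : 0 < c) (hx : c < f x) (hy : c ≤ f y)
    (ha : 0 < a) (hb : 0 < b) (hab : a + b = 1) : c < f (a • x + b • y) :=
  calc c = c ^ a * c ^ b := by rw [← Real.rpow_add hc, hab, Real.rpow_one]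
    _ < f x ^ a * f y ^ b := mul_lt_mul (Real.rpow_lt_rpow hc.le hx ha)
        (Real.rpow_le_rpow hc.le hy hb.le) (Real.rpow_pos_of_pos hc b)
        (Real.rpow_nonneg (hc.trans hx).le a)
    _ ≤ f (a • x + b • y) := hf ha hb hab x y

variable {E : Type*} [NormedAddCommGroup E] [NormedSpace ℝ E] {f : E → ℝ}

theorem IsLogConcave.interior_setOf_le (hf : IsLogConcave f) (hcont : Continuous f) {c : ℝ}
    {x₀ : E} (hc : 0 < c) (hx₀ : c < f x₀) : interior {x | c ≤ f x} = {x | c < f x} := by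
  refine Subset.antisymm (fun x hx => ?_)
    (interior_maximal (ofPred_subset_ofPred.mpr fun _ => le_of_lt)
      (isOpen_lt continuous_const hcont))
  obtain ⟨ε, hε, hmem⟩ := exists_pos_add_smul_mem_of_mem_interior hx (x - x₀)
  have hε₁ : 1 + ε ≠ 0 := by positivity
  have hcombo : (ε / (1 + ε)) • x₀ + (1 / (1 + ε)) • (x + ε • (x - x₀)) = x := by
    match_scalars
    all_goals field_simp
    all_goals ring
  have hlt := hf.lt_apply_add (a := ε / (1 + ε)) (b := 1 / (1 + ε)) hc hx₀ hmem (by positivity)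
    (by positivity) (by field_simp; ring)
  rwa [hcombo] at hlt

theorem IsLogConcave.frontier_setOf_le (hf : IsLogConcave f) (hcont : Continuous f) {c : ℝ}
    {x₀ : E} (hc : 0 < c) (hx₀ : c < f x₀) : frontier {x | c ≤ f x} = {x | f x = c} := by
  rw [(isClosed_le continuous_const hcont).frontier_eq, hf.interior_setOf_le hcont hc hx₀]
  ext x
  simp only [mem_sdiff, mem_ofPred_eq, not_lt]
  exact ⟨fun h => le_antisymm h.2 h.1, fun h => ⟨h.ge, h.le⟩⟩

theorem IsLogConcave.fderiv_sub_pos (hf : IsLogConcave f) {x y : E} (hx : 0 < f x)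
    (hxy : f x < f y) (hd : DifferentiableAt ℝ f x) : 0 < fderiv ℝ f x (y - x) := by
  have hline : HasDerivAt (fun t : ℝ => f (x + t • (y - x))) (fderiv ℝ f x (y - x)) 0 := by
    simpa only [zero_smul, add_zero] using
      hasDerivAt_comp_line (p := x) (v := y - x) (t := 0) (by simpa using hd)
  have hlog : 0 < Real.log (f y / f x) := Real.log_pos ((one_lt_div hx).mpr hxy)
  refine (mul_pos hx hlog).trans_le (ge_of_tendsto hline.tendsto_slope_zero_right ?_)
  filter_upwards [Ioo_mem_nhdsGT (zero_lt_one' ℝ)] with t ht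
  have hpow : f x * (f y / f x) ^ t = f y ^ t * f x ^ (1 - t) := by
    rw [Real.div_rpow (hx.trans hxy).le hx.le, Real.rpow_sub hx, Real.rpow_one]
    ring
  have hexp : 1 + t * Real.log (f y / f x) ≤ (f y / f x) ^ t := by
    rw [Real.rpow_def_of_pos (div_pos (hx.trans hxy) hx)]
    linarith [Real.add_one_le_exp (Real.log (f y / f x) * t)]
  have hconc : f y ^ t * f x ^ (1 - t) ≤ f (x + t • (y - x)) := by
    convert hf ht.1 (sub_pos.mpr ht.2) (add_sub_cancel t 1) y x using 2
    module
  rw [zero_add, zero_smul, add_zero, smul_eq_mul, ← div_eq_inv_mul, le_div_iff₀ ht.1]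
  nlinarith

theorem IsLogConcave.hasC2PositiveCurvatureBoundary_setOf_le (hf : IsLogConcave f)
    (hcont : Continuous f) {c : ℝ} {x₀ : E} (hc : 0 < c) (hx₀ : c < f x₀) {U : Set E}
    (hU : IsOpen U) (hlevel : {x | f x = c} ⊆ U) (hsmooth : ∀ x ∈ U, ContDiffAt ℝ 2 f x)
    (hneg : ∀ x, f x = c → ∀ v ≠ 0, fderiv ℝ f x v = 0 → fderiv ℝ (fderiv ℝ f) x v v < 0) :
    HasC2PositiveCurvatureBoundary {x | c ≤ f x} := by
  have hfderiv : fderiv ℝ (fun x => c - f x) = -fderiv ℝ f := funext fun x => fderiv_const_sub c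
  rw [HasC2PositiveCurvatureBoundary, hf.frontier_setOf_le hcont hc hx₀,
    hf.interior_setOf_le hcont hc hx₀]
  refine ⟨fun x => c - f x, U, hU, hlevel,
    fun x hx => (contDiffAt_const.sub (hsmooth x hx)).contDiffWithinAt,
    fun x _ => by rw [mem_ofPred_eq, sub_eq_zero, eq_comm], fun x _ hx => sub_neg.mpr hx,
    fun x (hx : f x = c) => ⟨fun hzero => ?_, fun v hv hDv => ?_⟩⟩
  · have hpos := hf.fderiv_sub_pos (hc.trans_eq hx.symm) (hx.trans_lt hx₀)
      ((hsmooth x (hlevel hx)).differentiableAt two_ne_zero)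
    rw [hfderiv, Pi.neg_apply, neg_eq_zero] at hzero
    simp [hzero] at hpos
  · rw [hfderiv, Pi.neg_apply, neg_apply, neg_eq_zero] at hDv
    rw [iteratedFDeriv_two_apply, hfderiv, fderiv_neg]
    simpa using hneg x hx v hv hDv

end LogConcaveSuperlevel

section ConvolutionBody

variable {E : Type*} [NormedAddCommGroup E] [MeasurableSpace E] {μ : Measure E} {K : Set E}

theorem covariogram_zero : covariogram μ K 0 = μ.real K := by
  simp [covariogram, translateInter]

theorem ofReal_covariogram [IsFiniteMeasureOnCompacts μ] (hKc : IsCompact K) (x : E) :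
    ENNReal.ofReal (covariogram μ K x) = μ (K ∩ (fun z => x + z) '' K) := by
  have hset : K ∩ (fun z => x + z) '' K = translateInter K x := by
    rw [image_add_left]
    simp only [preimage, inter_def, translateInter, mem_ofPred_eq, neg_add_eq_sub]
  rw [hset, covariogram, ofReal_measureReal
    ((measure_mono translateInter_subset).trans_lt hKc.measure_lt_top).ne]

variable [NormedSpace ℝ E] [FiniteDimensional ℝ E] [BorelSpace E] [μ.IsAddHaarMeasure]

theorem isLogConcave_covariogram (hK : Convex ℝ K) (hKc : IsCompact K) :
    IsLogConcave (covariogram μ K) :=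
  isLogConcave_measureReal_preimage_prodMk μ (convex_setOf_mem_translateInter hK)
    (fun x => (isCompact_translateInter hKc x).measurableSet)
    fun x => (isCompact_translateInter hKc x).measure_lt_top.ne

theorem ae_sub_notMem_frontier (hK : Convex ℝ K) (x : E) : ∀ᵐ z ∂μ, z - x ∉ frontier K := by
  have hnull : μ ((fun z => z - x) ⁻¹' frontier K) = 0 := by
    simp only [sub_eq_add_neg]
    rw [measure_preimage_add_right, hK.addHaar_frontier μ]
  exact measure_eq_zero_iff_ae_notMem.mp hnull

theorem continuous_covariogram (hK : Convex ℝ K) (hKc : IsCompact K) :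
    Continuous (covariogram μ K) := by
  have hmeas : ∀ x, MeasurableSet (translateInter K x) := fun x =>
    (isCompact_translateInter hKc x).measurableSet
  refine continuous_iff_continuousAt.mpr fun x => (ENNReal.tendsto_toReal
    (isCompact_translateInter hKc x).measure_lt_top.ne).comp ?_
  refine tendsto_measure_of_ae_tendsto_indicator (𝓝 x) (hmeas x) hmeas hKc.measurableSet
    hKc.measure_lt_top.ne (Filter.Eventually.of_forall fun y => translateInter_subset) ?_
  filter_upwards [ae_sub_notMem_frontier hK x] with z hz
  have hsub : ContinuousAt (fun y => z - y) x := by fun_prop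
  by_cases hzK : z - x ∈ K
  · have hzint : z - x ∈ interior K := by
      by_contra hzint
      exact hz ⟨subset_closure hzK, hzint⟩
    filter_upwards [hsub.eventually_mem (isOpen_interior.mem_nhds hzint)] with y hy
    exact and_congr_right fun _ => iff_of_true (interior_subset hy) hzK
  · filter_upwards [hsub.eventually_mem (hKc.isClosed.isOpen_compl.mem_nhds hzK)] with y hy
    exact and_congr_right fun _ => iff_of_false hy hzK

theorem overlap_nonempty_of_covariogram_pos (hK : Convex ℝ K) {x : E}
    (h : 0 < covariogram μ K x) : (overlap K x).Nonempty := by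
  have hpos : μ (translateInter K x) ≠ 0 := fun hzero => by
    simp [covariogram, measureReal_def, hzero] at h
  obtain ⟨z, hz, hz₀, hzx⟩ := ((frequently_ae_mem_iff.mpr hpos).and_eventually
    ((ae_sub_notMem_frontier hK 0).and (ae_sub_notMem_frontier hK x))).exists
  rw [sub_zero] at hz₀
  refine ⟨z, 0, ?_, ?_⟩
  · by_contra hzint
    exact hz₀ ⟨subset_closure hz.1, by simpa using hzint⟩
  · by_contra hzint
    exact hzx ⟨subset_closure hz.2, by simpa [sub_eq_add_neg] using hzint⟩

theorem fderiv_fderiv_covariogram_neg (hK : Convex ℝ K) (hKc : IsCompact K)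
    (hC : HasC2PositiveCurvatureBoundary K) {x v : E} (hx : x ≠ 0)
    (hpos : 0 < covariogram μ K x) (hv : v ≠ 0) (hDv : fderiv ℝ (covariogram μ K) x v = 0) :
    fderiv ℝ (fderiv ℝ (covariogram μ K)) x v v < 0 := by
  have hne := overlap_nonempty_of_covariogram_pos hK hpos
  by_contra! hnonneg
  obtain ⟨η, hη, hlt⟩ := exists_covariogram_add_smul_lt (μ := μ)
    (hC.strictConvex hK hKc.isClosed) hKc hx hv hne
  obtain ⟨t₁, ht₁, hle⟩ := exists_sub_mul_sq_le_of_fderiv_fderiv_nonneg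
    (contDiffAt_covariogram μ hK hKc hC hx hne) hDv hnonneg hη
  obtain ⟨t, ht, hlt_t⟩ := hlt t₁ ht₁
  exact (hle t ht).not_gt hlt_t

end ConvolutionBody

theorem stmt_9_general {E : Type*} [NormedAddCommGroup E] [NormedSpace ℝ E]
    [FiniteDimensional ℝ E] [MeasurableSpace E] [BorelSpace E] (μ : Measure E)
    [μ.IsAddHaarMeasure] {K : Set E} (hKcomp : IsCompact K) (hKconv : Convex ℝ K)
    (hKcurv : HasC2PositiveCurvatureBoundary K) {δ : ℝ≥0∞} (hδ0 : 0 < δ) (hδ : δ < μ K) :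
    HasC2PositiveCurvatureBoundary {x : E | δ ≤ μ (K ∩ (fun z => x + z) '' K)} := by
  have hcont := continuous_covariogram (μ := μ) hKconv hKcomp
  have hδ_real : 0 < δ.toReal := ENNReal.toReal_pos hδ0.ne' hδ.ne_top
  have hδ_lt : δ.toReal < covariogram μ K 0 := by
    rw [covariogram_zero]
    exact ENNReal.toReal_strict_mono hKcomp.measure_lt_top.ne hδ
  have hset : {x | δ ≤ μ (K ∩ (fun z => x + z) '' K)} = {x | δ.toReal ≤ covariogram μ K x} := by
    ext x
    rw [mem_ofPred_eq, mem_ofPred_eq, ← ofReal_covariogram hKcomp,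
      ENNReal.le_ofReal_iff_toReal_le hδ.ne_top (by exact measureReal_nonneg)]
  have hx_ne : ∀ x, covariogram μ K x = δ.toReal → x ≠ 0 := by
    rintro x hx rfl
    exact hδ_lt.ne' hx
  rw [hset]
  refine (isLogConcave_covariogram hKconv hKcomp).hasC2PositiveCurvatureBoundary_setOf_le hcont
    hδ_real hδ_lt (U := {x | x ≠ 0 ∧ 0 < covariogram μ K x})
    (isOpen_ne.inter (isOpen_lt continuous_const hcont))
    (fun x hx => ⟨hx_ne x hx, hδ_real.trans_eq hx.symm⟩) (fun x hx => ?_) fun x hx v hv => ?_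
  · exact contDiffAt_covariogram μ hKconv hKcomp hKcurv hx.1
      (overlap_nonempty_of_covariogram_pos hKconv hx.2)
  · exact fderiv_fderiv_covariogram_neg hKconv hKcomp hKcurv (hx_ne x hx)
      (hδ_real.trans_eq hx.symm) hv

/-- If a convex body `K` has `C²` boundary with everywhere positive Gauss–Kronecker
curvature, then so does every convolution body `K(δ)`. -/
theorem stmt_9 (n : ℕ) (K : Set (EuclideanSpace ℝ (Fin n)))
    (hKcomp : IsCompact K) (hKconv : Convex ℝ K) (hKint : (interior K).Nonempty)
    (hKcurv : HasC2PositiveCurvatureBoundary K)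
    (δ : ENNReal) (hδ0 : 0 < δ) (hδ : δ < volume K) :
    HasC2PositiveCurvatureBoundary
      {x : EuclideanSpace ℝ (Fin n) | δ ≤ volume (K ∩ (fun z => x + z) '' K)} :=
  stmt_9_general volume hKcomp hKconv hKcurv hδ0 hδ
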